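/- arXiv:1608.05449 — 2 statements merged into one kernel-verified Lean document; each statement's English description precedes it below -/
import Mathlib

section
/- There is an absolute constant c > 0 such that for every sufficiently small η > 0 and every sufficiently large T (depending on η), the number of primes p ≤ T for which p − 1 has a prime divisor q lying in the interval [T^(1/2−η), T^(1/2−η/2)] is greater than c·η·T/log T. -/
section
open Finset

noncomputable def ee (x : ℝ) : ℂ := Complex.exp (2 * Real.pi * Complex.I * x)

lemma ee_add (x y : ℝ) : ee (x + y) = ee x * ee y := by
  unfold ee; rw [← Complex.exp_add]; congr 1; push_cast; ring

lemma ee_neg (x : ℝ) : ee (-x) = (starRingEnd ℂ) (ee x) := by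
  unfold ee; rw [← Complex.exp_conj]; congr 1
  simp only [map_mul, Complex.conj_I, Complex.conj_ofReal, map_ofNat]
  push_cast; ring

lemma ee_nat_mul (n : ℕ) (x : ℝ) : ee (n * x) = ee x ^ n := by
  unfold ee; rw [← Complex.exp_nat_mul]; congr 1; push_cast; ring

lemma ee_int (k : ℤ) : ee k = 1 := by
  unfold ee
  rw [Complex.exp_eq_one_iff]
  exact ⟨k, by push_cast; ring⟩

lemma ee_eq_one_iff (x : ℝ) : ee x = 1 ↔ ∃ k : ℤ, x = k := by
  constructor
  · intro h
    unfold ee at h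
    rw [Complex.exp_eq_one_iff] at h
    obtain ⟨k, hk⟩ := h
    refine ⟨k, ?_⟩
    have h2 : (2 * Real.pi * Complex.I : ℂ) ≠ 0 := by
      simp [Real.pi_ne_zero]
    have : (x : ℂ) = (k : ℂ) := by
      apply mul_left_cancel₀ h2
      rw [hk]; ring
    exact_mod_cast this
  · rintro ⟨k, rfl⟩; exact ee_int k

lemma norm_ee (x : ℝ) : ‖ee x‖ = 1 := by
  unfold ee
  have : (2 * Real.pi * Complex.I * x : ℂ) = ((2 * Real.pi * x : ℝ) : ℂ) * Complex.I := by
    push_cast; ring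
  rw [this, Complex.norm_exp_ofReal_mul_I]

theorem ls_dual {ι : Type*} (R : Finset ι) (x : ι → ℝ) (N : ℕ) (Δ : ℝ) (hΔ0 : 0 ≤ Δ)
    (hΔ : ∀ r ∈ R, ∑ s ∈ R, ‖∑ n ∈ range N, ee (n * (x r - x s))‖ ≤ Δ) (a : ℕ → ℝ) :
    ∑ r ∈ R, ‖∑ n ∈ range N, (a n : ℂ) * ee (n * x r)‖ ^ 2 ≤ Δ * ∑ n ∈ range N, a n ^ 2 := by
  set S : ι → ℂ := fun r => ∑ n ∈ range N, (a n : ℂ) * ee (n * x r) with hS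
  set G : ℕ → ℂ := fun n => ∑ r ∈ R, (starRingEnd ℂ) (S r) * ee (n * x r) with hG
  set K : ι → ι → ℂ := fun r s => ∑ n ∈ range N, ee (n * (x r - x s)) with hK
  set B : ℝ := ∑ r ∈ R, ‖S r‖ ^ 2 with hB
  have hB0 : 0 ≤ B := sum_nonneg fun _ _ => by positivity
  have hKsymm : ∀ r s, ‖K r s‖ = ‖K s r‖ := by
    intro r s
    have : K r s = (starRingEnd ℂ) (K s r) := by
      simp only [hK, map_sum]
      refine sum_congr rfl fun n _ => ?_
      rw [← ee_neg]; congr 1; ring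
    rw [this, RCLike.norm_conj]
  have h1 : (B : ℂ) = ∑ n ∈ range N, (a n : ℂ) * G n := by
    have : (B : ℂ) = ∑ r ∈ R, (starRingEnd ℂ) (S r) * S r := by
      rw [hB]; push_cast
      refine sum_congr rfl fun r _ => ?_
      rw [mul_comm, Complex.mul_conj, Complex.normSq_eq_norm_sq]; push_cast; rfl
    rw [this]
    simp only [hG, mul_sum]
    rw [sum_comm]
    refine sum_congr rfl fun r _ => ?_
    conv_lhs => rw [hS]
    simp only [mul_sum]
    refine sum_congr rfl fun n _ => ?_
    ring
  have h2 : B ≤ ∑ n ∈ range N, |a n| * ‖G n‖ := by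
    calc B = ‖(B : ℂ)‖ := by rw [Complex.norm_real, Real.norm_of_nonneg hB0]
      _ ≤ _ := by
        rw [h1]; refine (norm_sum_le _ _).trans (le_of_eq ?_)
        refine sum_congr rfl fun n _ => ?_
        rw [norm_mul, Complex.norm_real, Real.norm_eq_abs]
  have h3 : B ^ 2 ≤ (∑ n ∈ range N, a n ^ 2) * ∑ n ∈ range N, ‖G n‖ ^ 2 := by
    calc B ^ 2 ≤ (∑ n ∈ range N, |a n| * ‖G n‖) ^ 2 := by gcongr
      _ ≤ (∑ n ∈ range N, |a n| ^ 2) * ∑ n ∈ range N, ‖G n‖ ^ 2 := sum_mul_sq_le_sq_mul_sq _ _ _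
      _ = _ := by simp
  have h4 : ((∑ n ∈ range N, ‖G n‖ ^ 2 : ℝ) : ℂ)
      = ∑ r ∈ R, ∑ s ∈ R, (starRingEnd ℂ) (S r) * S s * K r s := by
    push_cast
    have : ∀ n ∈ range N, (‖G n‖ ^ 2 : ℂ) = ∑ r ∈ R, ∑ s ∈ R,
        (starRingEnd ℂ) (S r) * S s * ee (n * (x r - x s)) := by
      intro n _
      have h5 : (‖G n‖ ^ 2 : ℂ) = G n * (starRingEnd ℂ) (G n) := by
        rw [Complex.mul_conj, Complex.normSq_eq_norm_sq]; push_cast; rfl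
      rw [h5]
      simp only [hG, map_sum, map_mul, Complex.conj_conj]
      rw [sum_mul_sum]
      refine sum_congr rfl fun r _ => sum_congr rfl fun s _ => ?_
      have : (n : ℝ) * (x r - x s) = n * x r + -(n * x s) := by ring
      rw [this, ee_add, ee_neg]; ring
    rw [sum_congr rfl this, sum_comm]
    refine sum_congr rfl fun r _ => ?_
    rw [sum_comm]
    refine sum_congr rfl fun s _ => ?_
    exact (mul_sum _ _ _).symm
  have h6 : ∑ n ∈ range N, ‖G n‖ ^ 2 ≤ Δ * B := by
    calc ∑ n ∈ range N, ‖G n‖ ^ 2 = ‖((∑ n ∈ range N, ‖G n‖ ^ 2 : ℝ) : ℂ)‖ := by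
          rw [Complex.norm_real, Real.norm_of_nonneg (sum_nonneg fun _ _ => by positivity)]
      _ ≤ ∑ r ∈ R, ∑ s ∈ R, ‖S r‖ * ‖S s‖ * ‖K r s‖ := by
          rw [h4]
          refine (norm_sum_le _ _).trans (sum_le_sum fun r _ => (norm_sum_le _ _).trans
            (sum_le_sum fun s _ => ?_))
          rw [norm_mul, norm_mul, RCLike.norm_conj]
      _ ≤ ∑ r ∈ R, ∑ s ∈ R, (‖S r‖ ^ 2 * ‖K r s‖ / 2 + ‖S s‖ ^ 2 * ‖K s r‖ / 2) := by
          refine sum_le_sum fun r _ => sum_le_sum fun s _ => ?_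
          rw [hKsymm s r]
          nlinarith [mul_nonneg (sq_nonneg (‖S r‖ - ‖S s‖)) (norm_nonneg (K r s))]
      _ = ∑ r ∈ R, ‖S r‖ ^ 2 * ∑ s ∈ R, ‖K r s‖ := by
          simp only [sum_add_distrib]
          rw [sum_comm (f := fun r s => ‖S s‖ ^ 2 * ‖K s r‖ / 2), ← sum_add_distrib]
          refine sum_congr rfl fun r _ => ?_
          rw [← sum_add_distrib, mul_sum]
          refine sum_congr rfl fun s _ => ?_
          ring
      _ ≤ ∑ r ∈ R, ‖S r‖ ^ 2 * Δ := by
          refine sum_le_sum fun r hr => ?_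
          gcongr
          exact hΔ r hr
      _ = Δ * B := by rw [hB, ← sum_mul, mul_comm]
  rcases hB0.eq_or_lt with h0 | h0
  · rw [← h0]
    exact mul_nonneg hΔ0 (sum_nonneg fun _ _ => sq_nonneg _)
  · have hA : 0 ≤ ∑ n ∈ range N, a n ^ 2 := sum_nonneg fun _ _ => sq_nonneg _
    have : B * B ≤ (Δ * ∑ n ∈ range N, a n ^ 2) * B := by nlinarith [mul_le_mul_of_nonneg_left h6 hA]
    exact le_of_mul_le_mul_right this h0

lemma norm_sum_ee_le (N : ℕ) (t : ℝ) (h0 : 0 < Int.fract t) :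
    ‖∑ n ∈ range N, ee (n * t)‖ ≤ 1 / Int.fract t + 1 / Int.fract (-t) := by
  set u := Int.fract t with hu
  have hu1 : u < 1 := Int.fract_lt_one t
  have hneg : Int.fract (-t) = 1 - u := Int.fract_neg (by rw [← hu]; exact h0.ne')
  have het : ee t = ee u := by
    have : t = u + (⌊t⌋ : ℤ) := by rw [hu]; exact (Int.fract_add_floor t).symm
    conv_lhs => rw [this]
    rw [ee_add, ee_int, mul_one]
  have hne : ee t ≠ 1 := by
    rw [het]; intro h
    obtain ⟨k, hk⟩ := (ee_eq_one_iff u).1 h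
    rw [hk] at h0 hu1
    have h1 : (0:ℤ) < k := by exact_mod_cast h0
    have h2 : k < (1:ℤ) := by exact_mod_cast hu1
    omega
  have hlow : 4 * min u (1 - u) ≤ ‖ee t - 1‖ := by
    rw [het]
    have : ee u = Complex.exp (Complex.I * ((2 * Real.pi * u : ℝ) : ℂ)) := by
      unfold ee; congr 1; push_cast; ring
    rw [this, Complex.norm_exp_I_mul_ofReal_sub_one]
    have h3 : 2 * Real.pi * u / 2 = Real.pi * u := by ring
    rw [h3, Real.norm_eq_abs]
    refine le_trans ?_ (le_abs_self _)
    have hpi := Real.pi_pos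
    rcases le_total u (1/2) with h | h
    · have := Real.mul_le_sin (x := Real.pi * u) (by positivity) (by nlinarith)
      have h5 : 2 / Real.pi * (Real.pi * u) = 2 * u := by field_simp
      have := min_le_left u (1 - u)
      linarith
    · have := Real.mul_le_sin (x := Real.pi * (1 - u)) (mul_nonneg hpi.le (by linarith)) (by nlinarith)
      have h5 : 2 / Real.pi * (Real.pi * (1 - u)) = 2 * (1 - u) := by field_simp
      have h6 : Real.sin (Real.pi * (1 - u)) = Real.sin (Real.pi * u) := by
        rw [← Real.sin_pi_sub]; congr 1; ring
      have := min_le_right u (1 - u)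
      linarith
  have hmin : 0 < min u (1 - u) := lt_min h0 (by linarith)
  have hgeom : ∑ n ∈ range N, ee (n * t) = (ee t ^ N - 1) / (ee t - 1) := by
    rw [← geom_sum_eq hne]
    exact sum_congr rfl fun n _ => ee_nat_mul n t
  rw [hgeom, norm_div, hneg]
  have hnum : ‖ee t ^ N - 1‖ ≤ 2 := by
    refine (norm_sub_le _ _).trans ?_
    rw [norm_pow, norm_ee]; norm_num
  have : ‖ee t ^ N - 1‖ / ‖ee t - 1‖ ≤ 2 / (4 * min u (1 - u)) := by gcongr
  refine this.trans ?_
  have h1 : 0 < 1 / u := by positivity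
  have h2 : 0 < 1 / (1 - u) := by
    have : 0 < 1 - u := by linarith
    positivity
  have h4 : 2 / (4 * min u (1 - u)) ≤ 1 / min u (1 - u) := by
    rw [div_le_div_iff₀ (by positivity) hmin]; nlinarith
  refine h4.trans ?_
  rcases min_choice u (1 - u) with h | h <;> rw [h] <;> linarith

end

section
open Finset

lemma sum_inv_max_le (D : ℕ) (hD : 1 ≤ D) :
    ∑ k ∈ range D, (1 : ℝ) / (max k 1 : ℕ) ≤ 2 + Real.log D := by
  obtain ⟨E, rfl⟩ : ∃ E, D = E + 1 := ⟨D - 1, by omega⟩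
  rw [sum_range_succ']
  have h1 : ∑ k ∈ range E, (1 : ℝ) / (max (k + 1) 1 : ℕ) = (harmonic E : ℝ) := by
    rw [harmonic]; push_cast
    refine sum_congr rfl fun k _ => ?_
    rw [max_eq_left (by linarith [Nat.cast_nonneg (α := ℝ) k]), one_div]
  rw [h1]
  have h2 := harmonic_le_one_add_log E
  have h3 : Real.log E ≤ Real.log ((E + 1 : ℕ) : ℝ) := by
    rcases Nat.eq_zero_or_pos E with h | h
    · subst h; simp
    · apply Real.log_le_log (by exact_mod_cast h); push_cast; linarith
  simp only [zero_le, sup_of_le_right, Nat.cast_one, div_one]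
  linarith

lemma spaced_sum {ι : Type*} [DecidableEq ι] (R : Finset ι) (x : ι → ℝ) (D : ℕ) (hD : 1 ≤ D)
    (hsp : ∀ r ∈ R, ∀ s ∈ R, r ≠ s → ∀ k : ℤ, 1 / (D : ℝ) ≤ |x r - x s - k|) (r : ι) (hr : r ∈ R) :
    ∑ s ∈ R.erase r, 1 / Int.fract (x r - x s) ≤ D * (2 + Real.log D) := by
  have hD0 : (0 : ℝ) < D := by exact_mod_cast hD
  set f : ι → ℕ := fun s => ⌊D * Int.fract (x r - x s)⌋₊ with hf
  have hlow : ∀ s ∈ R.erase r, 1 / (D : ℝ) ≤ Int.fract (x r - x s) := by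
    intro s hs
    rw [mem_erase] at hs
    have := hsp r hr s hs.2 (Ne.symm hs.1) ⌊x r - x s⌋
    rwa [Int.self_sub_floor, abs_of_nonneg (Int.fract_nonneg _)] at this
  have hbd : ∀ s ∈ R.erase r, 1 / Int.fract (x r - x s) ≤ D * (1 / (max (f s) 1 : ℕ)) := by
    intro s hs
    have h1 := hlow s hs
    have hpos : 0 < Int.fract (x r - x s) := lt_of_lt_of_le (by positivity) h1
    have h2 : (f s : ℝ) ≤ D * Int.fract (x r - x s) := Nat.floor_le (by positivity)
    have h3 : ((max (f s) 1 : ℕ) : ℝ) ≤ D * Int.fract (x r - x s) := by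
      rw [Nat.cast_max]
      apply max_le h2
      rw [div_le_iff₀ hD0] at h1
      push_cast; linarith
    have h4 : (0 : ℝ) < (max (f s) 1 : ℕ) := by
      have : 0 < max (f s) 1 := lt_max_of_lt_right one_pos
      exact_mod_cast this
    rw [mul_one_div, div_le_div_iff₀ hpos h4]
    linarith
  have hinj : Set.InjOn f (R.erase r : Finset ι) := by
    intro s hs t ht hst
    by_contra hne
    have hs' := mem_erase.1 (mem_coe.1 hs)
    have ht' := mem_erase.1 (mem_coe.1 ht)
    have h1 := hsp t ht'.2 s hs'.2 (Ne.symm hne) (⌊x r - x s⌋ - ⌊x r - x t⌋)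
    have h2 : x t - x s - ((⌊x r - x s⌋ - ⌊x r - x t⌋ : ℤ) : ℝ)
        = Int.fract (x r - x s) - Int.fract (x r - x t) := by
      unfold Int.fract; push_cast; ring
    rw [h2] at h1
    have a1 : (f s : ℝ) ≤ D * Int.fract (x r - x s) :=
      Nat.floor_le (mul_nonneg hD0.le (Int.fract_nonneg _))
    have a2 : (f t : ℝ) ≤ D * Int.fract (x r - x t) :=
      Nat.floor_le (mul_nonneg hD0.le (Int.fract_nonneg _))
    have b1 : D * Int.fract (x r - x s) < f s + 1 := Nat.lt_floor_add_one _
    have b2 : D * Int.fract (x r - x t) < f t + 1 := Nat.lt_floor_add_one _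
    rw [hst] at a1 b1
    have h3 : |D * (Int.fract (x r - x s) - Int.fract (x r - x t))| < 1 := by
      rw [abs_lt]; constructor <;> nlinarith
    rw [abs_mul, abs_of_pos hD0] at h3
    rw [div_le_iff₀ hD0] at h1
    linarith
  calc ∑ s ∈ R.erase r, 1 / Int.fract (x r - x s)
      ≤ ∑ s ∈ R.erase r, D * (1 / ((max (f s) 1 : ℕ) : ℝ)) := sum_le_sum hbd
    _ = ∑ k ∈ (R.erase r).image f, D * (1 / ((max k 1 : ℕ) : ℝ)) := by
        rw [sum_image hinj]
    _ ≤ ∑ k ∈ range D, D * (1 / ((max k 1 : ℕ) : ℝ)) := by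
        apply sum_le_sum_of_subset_of_nonneg
        · intro k hk
          obtain ⟨s, _, rfl⟩ := mem_image.1 hk
          rw [mem_range]
          have h1 : D * Int.fract (x r - x s) < D := by
            nlinarith [Int.fract_lt_one (x r - x s)]
          rw [hf]; exact (Nat.floor_lt (mul_nonneg hD0.le (Int.fract_nonneg _))).2 h1
        · intros; positivity
    _ = D * ∑ k ∈ range D, (1 / ((max k 1 : ℕ) : ℝ)) := by rw [mul_sum]
    _ ≤ _ := by gcongr; exact sum_inv_max_le D hD

theorem ls_spaced {ι : Type*} [DecidableEq ι] (R : Finset ι) (x : ι → ℝ) (D : ℕ) (hD : 1 ≤ D)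
    (hsp : ∀ r ∈ R, ∀ s ∈ R, r ≠ s → ∀ k : ℤ, 1 / (D : ℝ) ≤ |x r - x s - k|) (N : ℕ) (a : ℕ → ℝ) :
    ∑ r ∈ R, ‖∑ n ∈ range N, (a n : ℂ) * ee (n * x r)‖ ^ 2
      ≤ (N + 2 * (D * (2 + Real.log D))) * ∑ n ∈ range N, a n ^ 2 := by
  have hD0 : (0 : ℝ) < D := by exact_mod_cast hD
  have hlog : 0 ≤ Real.log D := Real.log_nonneg (by exact_mod_cast hD)
  apply ls_dual
  · positivity
  intro r hr
  rw [← add_sum_erase _ _ hr]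
  have h1 := spaced_sum R x D hD hsp r hr
  have h2 := spaced_sum R (fun s => - x s) D hD (fun r hr s hs hrs k => by
    have := hsp r hr s hs hrs (-k)
    rw [← abs_neg] at this
    refine this.trans (le_of_eq ?_)
    congr 1; push_cast; ring) r hr
  have h3 : ∑ s ∈ R.erase r, ‖∑ n ∈ range N, ee (n * (x r - x s))‖
      ≤ ∑ s ∈ R.erase r, (1 / Int.fract (x r - x s) + 1 / Int.fract (- x r - - x s)) := by
    refine sum_le_sum fun s hs => ?_
    have hs' := mem_erase.1 hs
    have h4 : 0 < Int.fract (x r - x s) := by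
      have := hsp r hr s hs'.2 (Ne.symm hs'.1) ⌊x r - x s⌋
      rw [Int.self_sub_floor, abs_of_nonneg (Int.fract_nonneg _)] at this
      exact lt_of_lt_of_le (by positivity) this
    have := norm_sum_ee_le N _ h4
    rwa [show -(x r - x s) = - x r - - x s by ring] at this
  rw [sum_add_distrib] at h3
  have h5 : ‖∑ n ∈ range N, ee (n * (x r - x r))‖ ≤ N := by
    refine (norm_sum_le _ _).trans ?_
    simp [norm_ee]
  linarith

theorem large_sieve (Qs : Finset ℕ) (Q : ℕ) (hQ1 : 1 ≤ Q) (hQ : ∀ q ∈ Qs, q.Prime ∧ q ≤ Q)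
    (N : ℕ) (a : ℕ → ℝ) :
    ∑ q ∈ Qs, ∑ b ∈ Ioo 0 q, ‖∑ n ∈ range N, (a n : ℂ) * ee (n * ((b : ℝ) / q))‖ ^ 2
      ≤ (N + 2 * ((Q : ℝ) ^ 2 * (2 + Real.log ((Q : ℝ) ^ 2)))) * ∑ n ∈ range N, a n ^ 2 := by
  have key := ls_spaced (Qs.sigma fun q => Ioo 0 q) (fun r => (r.2 : ℝ) / r.1) (Q ^ 2)
    (Nat.one_le_pow _ _ hQ1) ?_ N a
  · rw [sum_sigma] at key
    push_cast at key
    exact key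
  rintro ⟨q, b⟩ hr ⟨q', b'⟩ hs hne k
  simp only [mem_sigma, mem_Ioo] at hr hs
  obtain ⟨hq, hb0, hbq⟩ := hr
  obtain ⟨hq', hb0', hbq'⟩ := hs
  obtain ⟨hp, hqQ⟩ := hQ q hq
  obtain ⟨hp', hqQ'⟩ := hQ q' hq'
  have hq0 : (0 : ℝ) < q := by exact_mod_cast hp.pos
  have hq0' : (0 : ℝ) < q' := by exact_mod_cast hp'.pos
  simp only
  have h1 : (b : ℝ) / q - b' / q' - k = ((b * q' - b' * q - k * (q * q') : ℤ) : ℝ) / (q * q') := by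
    push_cast; field_simp
  have h2 : (b * q' - b' * q - k * (q * q') : ℤ) ≠ 0 := by
    intro h
    by_cases hqq : q = q'
    · subst hqq
      have h3 : ((b : ℤ) - b' - k * q) * q = 0 := by linarith
      have hqz : (q : ℤ) ≠ 0 := by exact_mod_cast hp.ne_zero
      have h4 : (b : ℤ) - b' - k * q = 0 := by
        rcases mul_eq_zero.1 h3 with h | h
        · exact h
        · exact absurd h hqz
      have h5 : k = 0 := by
        by_contra hk
        rcases lt_or_gt_of_ne hk with h | h
        · have : k ≤ -1 := by omega
          nlinarith
        · have : 1 ≤ k := by omega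
          nlinarith
      subst h5
      apply hne
      have : b = b' := by omega
      subst this; rfl
    · have h3 : (q : ℤ) ∣ b * q' := ⟨b' + k * q', by linarith⟩
      have h4 : q ∣ b * q' := by exact_mod_cast h3
      rcases hp.dvd_mul.1 h4 with h | h
      · have := Nat.le_of_dvd hb0 h; omega
      · exact hqq ((Nat.prime_dvd_prime_iff_eq hp hp').1 h)
  rw [h1, abs_div, abs_of_pos (mul_pos hq0 hq0'), div_le_div_iff₀ (by positivity) (by positivity)]
  have h3 : (1 : ℝ) ≤ |((b * q' - b' * q - k * (q * q') : ℤ) : ℝ)| := by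
    rw [← Int.cast_abs]; exact_mod_cast Int.one_le_abs h2
  have h4 : (q : ℝ) * q' ≤ (Q ^ 2 : ℕ) := by
    have : q * q' ≤ Q ^ 2 := by rw [sq]; exact Nat.mul_le_mul hqQ hqQ'
    exact_mod_cast this
  have h5 : (0 : ℝ) ≤ (Q ^ 2 : ℕ) := by positivity
  nlinarith

theorem variance_identity (q : ℕ) [hq : Fact q.Prime] (N : ℕ) (a : ℕ → ℝ) :
    (q : ℝ) * ∑ x : ZMod q, ((∑ n ∈ (range N).filter (fun n : ℕ => (n : ZMod q) = x), a n)
        - (∑ n ∈ range N, a n) / q) ^ 2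
      = ∑ b ∈ Ioo 0 q, ‖∑ n ∈ range N, (a n : ℂ) * ee (n * ((b : ℝ) / q))‖ ^ 2 := by
  have hq0 : (q : ℝ) ≠ 0 := by exact_mod_cast hq.out.ne_zero
  set A : ZMod q → ℝ := fun x => ∑ n ∈ (range N).filter (fun n : ℕ => (n : ZMod q) = x), a n with hA
  set S : ℝ := ∑ n ∈ range N, a n with hS
  have hAS : ∑ x, A x = S := by
    rw [hA, hS]; exact sum_fiberwise _ _ _
  have hcardq : (Fintype.card (ZMod q) : ℝ) = q := by rw [ZMod.card]
  have h1 : (q : ℝ) * ∑ x : ZMod q, (A x - S / q) ^ 2 = q * (∑ x, A x ^ 2) - S ^ 2 := by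
    have : ∀ x, (A x - S / q) ^ 2 = A x ^ 2 - 2 * (S / q) * A x + (S / q) ^ 2 := fun x => by ring
    simp_rw [this, sum_add_distrib, sum_sub_distrib, ← mul_sum, hAS, sum_const, card_univ,
      nsmul_eq_mul, hcardq]
    field_simp
    ring
  have horth : ∀ m n : ℕ, ∑ b ∈ range q, ee ((m : ℝ) * (b / q)) * ee (-((n : ℝ) * (b / q)))
      = if (m : ZMod q) = (n : ZMod q) then (q : ℂ) else 0 := by
    intro m n
    have h2 : ∀ b ∈ range q, ee ((m : ℝ) * (b / q)) * ee (-((n : ℝ) * (b / q)))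
        = ee (((m : ℝ) - n) / q) ^ b := by
      intro b _
      rw [← ee_add, ← ee_nat_mul]; congr 1; ring
    rw [sum_congr rfl h2]
    split_ifs with h
    · have h3 : ee (((m : ℝ) - n) / q) = 1 := by
        rw [ee_eq_one_iff]
        have : ((m : ℤ) : ZMod q) = ((n : ℤ) : ZMod q) := by exact_mod_cast h
        rw [ZMod.intCast_eq_intCast_iff_dvd_sub] at this
        obtain ⟨k, hk⟩ := this
        refine ⟨-k, ?_⟩
        have hk' : (n : ℝ) - m = q * k := by exact_mod_cast hk
        field_simp; push_cast; linarith
      rw [h3]; simp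
    · have h3 : ee (((m : ℝ) - n) / q) ≠ 1 := by
        rw [Ne, ee_eq_one_iff]
        rintro ⟨k, hk⟩
        apply h
        have : ((m : ℤ) : ZMod q) = ((n : ℤ) : ZMod q) := by
          rw [ZMod.intCast_eq_intCast_iff_dvd_sub]
          refine ⟨-k, ?_⟩
          have : (n : ℝ) - m = q * -k := by field_simp at hk; linarith
          exact_mod_cast this
        exact_mod_cast this
      rw [geom_sum_eq h3, ← ee_nat_mul]
      have : (q : ℝ) * (((m : ℝ) - n) / q) = ((m - n : ℤ) : ℝ) := by
        push_cast; field_simp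
      rw [this, ee_int]; simp
  have h2 : ∑ b ∈ range q, ‖∑ n ∈ range N, (a n : ℂ) * ee (n * ((b : ℝ) / q))‖ ^ 2
      = q * (∑ x, A x ^ 2) := by
    have hc : ((∑ b ∈ range q, ‖∑ n ∈ range N, (a n : ℂ) * ee (n * ((b : ℝ) / q))‖ ^ 2 : ℝ) : ℂ)
        = ((q * (∑ x, A x ^ 2) : ℝ) : ℂ) := by
      push_cast
      have h3 : ∀ b ∈ range q, ((‖∑ n ∈ range N, (a n : ℂ) * ee (n * ((b : ℝ) / q))‖ : ℂ) ^ 2)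
          = ∑ m ∈ range N, ∑ n ∈ range N, (a m : ℂ) * a n *
            (ee ((m : ℝ) * (b / q)) * ee (-((n : ℝ) * (b / q)))) := by
        intro b _
        set z := ∑ n ∈ range N, (a n : ℂ) * ee (n * ((b : ℝ) / q)) with hz
        have : ((‖z‖ : ℂ) ^ 2) = z * (starRingEnd ℂ) z := by
          rw [Complex.mul_conj, Complex.normSq_eq_norm_sq]; push_cast; rfl
        rw [this, hz, map_sum, sum_mul_sum]
        refine sum_congr rfl fun m _ => sum_congr rfl fun n _ => ?_
        rw [map_mul, Complex.conj_ofReal, ee_neg]; ring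
      rw [sum_congr rfl h3, sum_comm]
      have h4 : ∀ m ∈ range N, ∑ b ∈ range q, ∑ n ∈ range N, (a m : ℂ) * a n *
            (ee ((m : ℝ) * (b / q)) * ee (-((n : ℝ) * (b / q))))
          = (q : ℂ) * ((a m : ℂ) * A m) := by
        intro m _
        rw [sum_comm]
        simp_rw [← mul_sum, horth]
        rw [hA]
        simp only
        push_cast
        rw [sum_filter, mul_sum, mul_sum]
        refine sum_congr rfl fun n _ => ?_
        by_cases h : (m : ZMod q) = n
        · rw [if_pos h, if_pos h.symm]; ring
        · rw [if_neg h, if_neg (Ne.symm h)]; ring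
      rw [sum_congr rfl h4, ← mul_sum]
      congr 1
      rw [← sum_fiberwise (range N) (fun n : ℕ => (n : ZMod q))]
      refine sum_congr rfl fun x _ => ?_
      have : ∀ n ∈ (range N).filter (fun n : ℕ => (n : ZMod q) = x), (a n : ℂ) * A n = a n * A x := by
        intro n hn
        rw [(mem_filter.1 hn).2]
      rw [sum_congr rfl this, ← sum_mul, sq]
      congr 1
      rw [hA]; push_cast; rfl
    exact_mod_cast hc
  rw [h1, ← h2]
  have h3 : range q = insert 0 (Ioo 0 q) := by
    ext b; simp only [mem_range, mem_insert, mem_Ioo]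
    have := hq.out.pos
    omega
  rw [h3, sum_insert (by simp)]
  have h4 : ‖∑ n ∈ range N, (a n : ℂ) * ee (n * (((0 : ℕ) : ℝ) / q))‖ ^ 2 = S ^ 2 := by
    have : ∀ n ∈ range N, (a n : ℂ) * ee (n * (((0 : ℕ) : ℝ) / q)) = a n := by
      intro n _
      have := ee_int 0
      simp only [Int.cast_zero] at this
      simp [this]
    rw [sum_congr rfl this, ← Complex.ofReal_sum, Complex.norm_real, Real.norm_eq_abs, sq_abs]
  rw [h4]; ring

end

section
open Finset

noncomputable def wz (q : ℕ) (x : ZMod q) : ℝ :=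
  (if x = 1 then 1 else 0) - (if x = 0 then 0 else 1 / ((q : ℝ) - 1))

noncomputable def ww (q n : ℕ) : ℝ := wz q (n : ZMod q)

noncomputable def VV (q N : ℕ) [NeZero q] (a : ℕ → ℝ) : ℝ :=
  ∑ x : ZMod q, ((∑ n ∈ (range N).filter (fun n : ℕ => (n : ZMod q) = x), a n)
        - (∑ n ∈ range N, a n) / q) ^ 2

lemma sum_fiber_ww (q : ℕ) [NeZero q] (N : ℕ) (b : ℕ → ℝ) (f : ZMod q → ℝ) :
    ∑ n ∈ range N, b n * f n
      = ∑ y : ZMod q, (∑ n ∈ (range N).filter (fun n : ℕ => (n : ZMod q) = y), b n) * f y := by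
  rw [← sum_fiberwise (range N) (fun n : ℕ => (n : ZMod q))]
  refine sum_congr rfl fun y _ => ?_
  rw [sum_mul]
  refine sum_congr rfl fun n hn => ?_
  rw [(mem_filter.1 hn).2]

lemma bilinear_zmod (q : ℕ) [hq : Fact q.Prime] (A B : ZMod q → ℝ) (c e : ℝ) :
    (∑ x, ∑ y, A x * B y * wz q (x * y)) ^ 2 ≤ (∑ x, (A x - c) ^ 2) * ∑ y, (B y - e) ^ 2 := by
  have hq1 : (0 : ℝ) < (q : ℝ) - 1 := by
    have : (1 : ℝ) < q := by exact_mod_cast hq.out.one_lt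
    linarith
  set U : Finset (ZMod q) := univ.erase 0 with hU
  have hcard : (U.card : ℝ) = q - 1 := by
    rw [hU, card_erase_of_mem (mem_univ _), card_univ, ZMod.card, Nat.cast_sub hq.out.one_le]
    simp
  set d : ℝ := (∑ y ∈ U, B y) / ((q : ℝ) - 1) with hd
  have h0 : ∀ x : ZMod q, ∑ y, A x * B y * wz q (x * y) = if x = 0 then 0 else A x * (B x⁻¹ - d) := by
    intro x
    split_ifs with hx
    · subst hx
      apply sum_eq_zero
      intro y _
      simp [wz]
    · have : ∀ y, A x * B y * wz q (x * y)
          = A x * ((if y = x⁻¹ then B y else 0) - (if y = 0 then 0 else B y / ((q : ℝ) - 1))) := by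
        intro y
        unfold wz
        have e1 : x * y = 1 ↔ y = x⁻¹ := by
          constructor
          · intro h; exact eq_inv_of_mul_eq_one_right h
          · rintro rfl; exact mul_inv_cancel₀ hx
        have e2 : x * y = 0 ↔ y = 0 := by simp [hx]
        simp only [e1, e2]
        split_ifs <;> ring
      simp_rw [this, ← mul_sum, sum_sub_distrib]
      congr 2
      · simp
      · rw [hd, sum_div, hU, ← sum_erase_add _ _ (mem_univ (0 : ZMod q))]
        rw [if_pos rfl, add_zero]
        refine sum_congr rfl fun y hy => ?_
        rw [if_neg (mem_erase.1 hy).1]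
  have h1 : ∑ x, ∑ y, A x * B y * wz q (x * y) = ∑ x ∈ U, A x * (B x⁻¹ - d) := by
    simp_rw [h0]
    rw [← sum_erase_add _ _ (mem_univ (0 : ZMod q)), if_pos rfl, add_zero]
    refine sum_congr rfl fun y hy => ?_
    rw [if_neg (mem_erase.1 hy).1]
  have hinv : ∀ g : ZMod q → ℝ, ∑ x ∈ U, g x⁻¹ = ∑ x ∈ U, g x := by
    intro g
    refine sum_nbij' (fun x => x⁻¹) (fun x => x⁻¹) ?_ ?_ ?_ ?_ ?_
    · intro x hx; simp [hU] at hx ⊢; exact hx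
    · intro x hx; simp [hU] at hx ⊢; exact hx
    · intro x _; simp
    · intro x _; simp
    · intro x _; rfl
  have hsum : ∑ x ∈ U, (B x - d) = 0 := by
    rw [sum_sub_distrib, sum_const, nsmul_eq_mul, hcard, hd]; field_simp; ring
  have h2 : ∑ x ∈ U, A x * (B x⁻¹ - d) = ∑ x ∈ U, (A x - c) * (B x⁻¹ - d) := by
    have : ∑ x ∈ U, (A x - c) * (B x⁻¹ - d) = ∑ x ∈ U, A x * (B x⁻¹ - d)
        - c * ∑ x ∈ U, (B x⁻¹ - d) := by
      rw [mul_sum, ← sum_sub_distrib]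
      exact sum_congr rfl fun x _ => by ring
    rw [this, hinv (fun x => B x - d), hsum]; ring
  rw [h1, h2]
  refine (sum_mul_sq_le_sq_mul_sq _ _ _).trans ?_
  rw [hinv (fun x => (B x - d) ^ 2)]
  have h3 : ∑ x ∈ U, (B x - d) ^ 2 ≤ ∑ x ∈ U, (B x - e) ^ 2 := by
    have : ∑ x ∈ U, (B x - e) ^ 2 = ∑ x ∈ U, (B x - d) ^ 2 + 2 * (d - e) * ∑ x ∈ U, (B x - d)
        + U.card * (d - e) ^ 2 := by
      rw [mul_sum, ← nsmul_eq_mul, ← sum_const, ← sum_add_distrib, ← sum_add_distrib]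
      exact sum_congr rfl fun x _ => by ring
    rw [this, hsum]
    have : 0 ≤ (U.card : ℝ) * (d - e) ^ 2 := by positivity
    linarith
  have h4 : ∀ (g : ZMod q → ℝ), ∑ x ∈ U, (g x) ^ 2 ≤ ∑ x, (g x) ^ 2 := by
    intro g
    apply sum_le_sum_of_subset_of_nonneg (subset_univ _)
    intros; positivity
  exact mul_le_mul (h4 _) (h3.trans (h4 _)) (sum_nonneg fun _ _ => sq_nonneg _)
    (sum_nonneg fun _ _ => sq_nonneg _)

lemma bilinear_q (q : ℕ) [hq : Fact q.Prime] (M N : ℕ) (a b : ℕ → ℝ) :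
    (∑ m ∈ range M, ∑ n ∈ range N, a m * b n * ww q (m * n)) ^ 2 ≤ VV q M a * VV q N b := by
  refine le_trans (le_of_eq ?_) (bilinear_zmod q _ _ _ _)
  congr 1
  have h1 : ∀ m ∈ range M, ∑ n ∈ range N, a m * b n * ww q (m * n)
      = a m * ∑ y : ZMod q, (∑ n ∈ (range N).filter (fun n : ℕ => (n : ZMod q) = y), b n)
        * wz q ((m : ZMod q) * y) := by
    intro m _
    rw [← sum_fiber_ww q N b (fun y => wz q ((m : ZMod q) * y)), mul_sum]
    refine sum_congr rfl fun n _ => ?_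
    unfold ww; push_cast; ring
  rw [sum_congr rfl h1, sum_fiber_ww q M a (fun x => ∑ y : ZMod q,
    (∑ n ∈ (range N).filter (fun n : ℕ => (n : ZMod q) = y), b n) * wz q (x * y))]
  refine sum_congr rfl fun x _ => ?_
  rw [mul_sum]
  exact sum_congr rfl fun y _ => by ring

noncomputable def LS (Q N : ℕ) : ℝ := N + 2 * ((Q : ℝ) ^ 2 * (2 + Real.log ((Q : ℝ) ^ 2)))

/-- The bilinear large-sieve estimate. -/
theorem bilinear_large (Qs : Finset ℕ) (Q : ℕ) (Q0 : ℝ) (hQ0 : 0 < Q0) (hQ1 : 1 ≤ Q)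
    (hQ : ∀ q ∈ Qs, q.Prime ∧ q ≤ Q ∧ Q0 ≤ q) (M N : ℕ) (a b : ℕ → ℝ) :
    ∑ q ∈ Qs, |∑ m ∈ range M, ∑ n ∈ range N, a m * b n * ww q (m * n)|
      ≤ 1 / Q0 * √((LS Q M * ∑ m ∈ range M, a m ^ 2) * (LS Q N * ∑ n ∈ range N, b n ^ 2)) := by
  classical
  let V : ℕ → (ℕ → ℝ) → ℕ → ℝ := fun N a q => if h : q.Prime then
    have : Fact q.Prime := ⟨h⟩; VV q N a else 0
  have hV0 : ∀ N a q, 0 ≤ V N a q := by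
    intro N a q
    simp only [V]
    split_ifs
    · exact sum_nonneg fun _ _ => sq_nonneg _
    · exact le_rfl
  have hVsum : ∀ N a, ∑ q ∈ Qs, V N a q ≤ 1 / Q0 * (LS Q N * ∑ n ∈ range N, a n ^ 2) := by
    intro N a
    have h := large_sieve Qs Q hQ1 (fun q hq => ⟨(hQ q hq).1, (hQ q hq).2.1⟩) N a
    rw [one_div, inv_mul_eq_div, le_div_iff₀ hQ0]
    refine le_trans ?_ h
    rw [sum_mul]
    refine sum_le_sum fun q hq => ?_
    have : Fact q.Prime := ⟨(hQ q hq).1⟩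
    rw [← variance_identity q N a]
    have h1 : V N a q = VV q N a := by simp only [V]; rw [dif_pos (hQ q hq).1]
    have h2 := hV0 N a q
    rw [h1] at h2 ⊢
    rw [mul_comm]
    exact mul_le_mul_of_nonneg_right (hQ q hq).2.2 h2
  have hLS : ∀ N (a : ℕ → ℝ), 0 ≤ LS Q N * ∑ n ∈ range N, a n ^ 2 := by
    intro N a
    refine mul_nonneg ?_ (sum_nonneg fun _ _ => sq_nonneg _)
    unfold LS
    have : 0 ≤ Real.log ((Q : ℝ) ^ 2) := Real.log_nonneg (by
      have : (1 : ℝ) ≤ Q := by exact_mod_cast hQ1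
      nlinarith)
    positivity
  calc ∑ q ∈ Qs, |∑ m ∈ range M, ∑ n ∈ range N, a m * b n * ww q (m * n)|
      ≤ ∑ q ∈ Qs, √(V M a q) * √(V N b q) := by
        refine sum_le_sum fun q hq => ?_
        have : Fact q.Prime := ⟨(hQ q hq).1⟩
        have h1 : ∀ N a, V N a q = VV q N a := by
          intro N a; simp only [V]; rw [dif_pos (hQ q hq).1]
        rw [← Real.sqrt_mul (hV0 _ _ _), h1, h1]
        exact Real.abs_le_sqrt (bilinear_q q M N a b)
    _ ≤ √(∑ q ∈ Qs, V M a q) * √(∑ q ∈ Qs, V N b q) :=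
        Real.sum_sqrt_mul_sqrt_le _ (fun q => hV0 _ _ q) (fun q => hV0 _ _ q)
    _ ≤ √(1 / Q0 * (LS Q M * ∑ m ∈ range M, a m ^ 2))
        * √(1 / Q0 * (LS Q N * ∑ n ∈ range N, b n ^ 2)) := by
        gcongr
        · exact hVsum M a
        · exact hVsum N b
    _ = _ := by
        rw [← Real.sqrt_mul (mul_nonneg (by positivity) (hLS M a))]
        have : 1 / Q0 * (LS Q M * ∑ m ∈ range M, a m ^ 2) * (1 / Q0 * (LS Q N * ∑ n ∈ range N, b n ^ 2))
          = (1 / Q0) ^ 2 * ((LS Q M * ∑ m ∈ range M, a m ^ 2) * (LS Q N * ∑ n ∈ range N, b n ^ 2)) := by ring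
        rw [this, Real.sqrt_mul (by positivity), Real.sqrt_sq (by positivity)]

end

section
open Finset

lemma sum_wz (q : ℕ) [hq : Fact q.Prime] : ∑ x, wz q x = 0 := by
  have hq1 : (0 : ℝ) < (q : ℝ) - 1 := by
    have : (1 : ℝ) < q := by exact_mod_cast hq.out.one_lt
    linarith
  unfold wz
  rw [sum_sub_distrib]
  have h1 : ∑ x : ZMod q, (if x = 0 then (0 : ℝ) else 1 / ((q : ℝ) - 1)) = 1 := by
    rw [← sum_erase_add _ _ (mem_univ (0 : ZMod q)), if_pos rfl, add_zero]
    have : ∀ x ∈ (univ.erase (0 : ZMod q)), (if x = 0 then (0 : ℝ) else 1 / ((q : ℝ) - 1))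
        = 1 / ((q : ℝ) - 1) := fun x hx => if_neg (mem_erase.1 hx).1
    rw [sum_congr rfl this, sum_const, card_erase_of_mem (mem_univ _), card_univ, ZMod.card,
      nsmul_eq_mul, Nat.cast_sub hq.out.one_le]
    push_cast; field_simp
  rw [h1]; simp

lemma sum_abs_wz (q : ℕ) [hq : Fact q.Prime] : ∑ x, |wz q x| ≤ 2 := by
  have hq1 : (0 : ℝ) < (q : ℝ) - 1 := by
    have : (1 : ℝ) < q := by exact_mod_cast hq.out.one_lt
    linarith
  have h0 : ∀ x, |wz q x| ≤ (if x = 1 then (2 : ℝ) else 0) - wz q x := by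
    intro x
    unfold wz
    have h2 : (0 : ℝ) < 1 / ((q : ℝ) - 1) := by positivity
    have h3 : 1 / ((q : ℝ) - 1) ≤ 1 := by
      rw [div_le_one hq1]
      have : (2 : ℝ) ≤ q := by exact_mod_cast hq.out.two_le
      linarith
    rw [abs_le]
    split_ifs <;> constructor <;> linarith
  refine (sum_le_sum fun x _ => h0 x).trans ?_
  rw [sum_sub_distrib, sum_wz]; simp

lemma abs_wz_le (q : ℕ) (hq : q.Prime) (x : ZMod q) :
    |wz q x| ≤ (if x = 1 then (1 : ℝ) else 0) + 1 / ((q : ℝ) - 1) := by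
  have hq1 : (0 : ℝ) < (q : ℝ) - 1 := by
    have : (1 : ℝ) < q := by exact_mod_cast hq.one_lt
    linarith
  have h2 : (0 : ℝ) < 1 / ((q : ℝ) - 1) := by positivity
  unfold wz
  rw [abs_le]
  split_ifs <;> constructor <;> linarith

lemma abs_wz_le_one (q : ℕ) (hq : q.Prime) (x : ZMod q) : |wz q x| ≤ 1 := by
  have hq1 : (0 : ℝ) < (q : ℝ) - 1 := by
    have : (1 : ℝ) < q := by exact_mod_cast hq.one_lt
    linarith
  have h2 : (0 : ℝ) < 1 / ((q : ℝ) - 1) := by positivity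
  have h3 : 1 / ((q : ℝ) - 1) ≤ 1 := by
    rw [div_le_one hq1]
    have : (2 : ℝ) ≤ q := by exact_mod_cast hq.two_le
    linarith
  unfold wz
  rw [abs_le]
  split_ifs <;> constructor <;> linarith

lemma ww_zero (q : ℕ) (hq : q.Prime) : ww q 0 = 0 := by
  have : Fact q.Prime := ⟨hq⟩
  unfold ww wz; simp

lemma range_succ_Ioc (X : ℕ) : range (X + 1) = insert 0 (Ioc 0 X) := by
  ext n; simp only [mem_range, mem_insert, mem_Ioc]; omega

lemma typeI_sum (q : ℕ) (hq : q.Prime) (m : ℕ) (hm : (m : ZMod q) ≠ 0) (X : ℕ) :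
    |∑ n ∈ Ioc 0 X, ww q (m * n)| ≤ 2 := by
  have : Fact q.Prime := ⟨hq⟩
  have h0 : ∑ n ∈ Ioc 0 X, ww q (m * n) = ∑ n ∈ range (X + 1), 1 * wz q ((m : ZMod q) * (n : ZMod q)) := by
    rw [range_succ_Ioc, sum_insert (by simp)]
    have h1 := ww_zero q hq
    unfold ww at h1 ⊢
    simp only [Nat.cast_zero, mul_zero, one_mul, Nat.cast_mul] at h1 ⊢
    rw [h1, zero_add]
  rw [h0, sum_fiber_ww q (X + 1) (fun _ => 1) (fun y => wz q ((m : ZMod q) * y))]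
  set k := (X + 1) / q with hk
  set c : ZMod q → ℝ := fun y => ∑ n ∈ (range (X + 1)).filter (fun n : ℕ => (n : ZMod q) = y), (1 : ℝ) with hc
  have hcb : ∀ y, |c y - k| ≤ 1 := by
    intro y
    have h2 : c y = ((X + 1).count (· ≡ y.val [MOD q]) : ℕ) := by
      rw [hc, Nat.count_eq_card_filter_range]
      simp only [sum_const, nsmul_eq_mul, mul_one]
      congr 2
      ext n
      simp only [mem_filter]
      rw [← ZMod.natCast_eq_natCast_iff, ZMod.natCast_zmod_val]
    rw [h2, Nat.count_modEq_card _ hq.pos]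
    split_ifs <;> simp [hk]
  have h3 : ∑ y, wz q ((m : ZMod q) * y) = 0 := by
    rw [← sum_wz q]
    exact Fintype.sum_equiv (Equiv.mulLeft₀ (m : ZMod q) hm) _ _ (fun y => rfl)
  have h3' : ∑ y, |wz q ((m : ZMod q) * y)| ≤ 2 := by
    refine le_trans (le_of_eq ?_) (sum_abs_wz q)
    exact Fintype.sum_equiv (Equiv.mulLeft₀ (m : ZMod q) hm) _ _ (fun y => rfl)
  have h4 : ∑ y, c y * wz q ((m : ZMod q) * y) = ∑ y, (c y - k) * wz q ((m : ZMod q) * y) := by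
    simp_rw [sub_mul]
    rw [sum_sub_distrib, ← mul_sum, h3]; ring
  rw [h4]
  refine (abs_sum_le_sum_abs _ _).trans (le_trans (sum_le_sum fun y _ => ?_) h3')
  rw [abs_mul]
  have := mul_le_mul_of_nonneg_right (hcb y) (abs_nonneg (wz q ((m : ZMod q) * y)))
  linarith

lemma abel_mono (f : ℕ → ℝ) (g : ℕ → ℝ) (hg : Monotone g) (hg0 : 0 ≤ g 0) (C : ℝ)
    (hF : ∀ k, |∑ n ∈ Ioc 0 k, f n| ≤ C) (X : ℕ) : |∑ n ∈ Ioc 0 X, g n * f n| ≤ 2 * C * g X := by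
  have hC : 0 ≤ C := (abs_nonneg _).trans (hF 0)
  have hgn : ∀ n, 0 ≤ g n := fun n => hg0.trans (hg (Nat.zero_le n))
  have key : |∑ n ∈ Ioc 0 X, g n * f n - g X * ∑ n ∈ Ioc 0 X, f n| ≤ C * g X := by
    induction X with
    | zero => simpa using mul_nonneg hC hg0
    | succ X ih =>
      rw [sum_Ioc_succ_top (Nat.zero_le X), sum_Ioc_succ_top (Nat.zero_le X)]
      have : ∑ n ∈ Ioc 0 X, g n * f n + g (X + 1) * f (X + 1)
          - g (X + 1) * (∑ n ∈ Ioc 0 X, f n + f (X + 1))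
          = (∑ n ∈ Ioc 0 X, g n * f n - g X * ∑ n ∈ Ioc 0 X, f n)
            - (g (X + 1) - g X) * ∑ n ∈ Ioc 0 X, f n := by ring
      rw [this]
      refine (abs_sub _ _).trans ?_
      rw [abs_mul, abs_of_nonneg (sub_nonneg.2 (hg (Nat.le_succ X)))]
      have := mul_le_mul_of_nonneg_left (hF X) (sub_nonneg.2 (hg (Nat.le_succ X)))
      linarith
  have h2 : |g X * ∑ n ∈ Ioc 0 X, f n| ≤ C * g X := by
    rw [abs_mul, abs_of_nonneg (hgn X), mul_comm]
    exact mul_le_mul_of_nonneg_right (hF X) (hgn X)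
  rw [abs_le] at *
  constructor <;> linarith [key.1, key.2, h2.1, h2.2]

lemma log_mono_nat : Monotone (fun n : ℕ => Real.log (n : ℝ)) := by
  intro a b hab
  rcases Nat.eq_zero_or_pos a with h | h
  · subst h; simp only [Nat.cast_zero, Real.log_zero]; exact Real.log_natCast_nonneg b
  · exact Real.log_le_log (by exact_mod_cast h) (by exact_mod_cast hab)

lemma typeI_log_sum (q : ℕ) (hq : q.Prime) (m : ℕ) (hm : (m : ZMod q) ≠ 0) (X : ℕ) :
    |∑ n ∈ Ioc 0 X, Real.log n * ww q (m * n)| ≤ 4 * Real.log X := by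
  have := abel_mono (fun n => ww q (m * n)) (fun n => Real.log n) log_mono_nat (by simp) 2
    (fun k => typeI_sum q hq m hm k) X
  linarith

/-- Swapping a divisor sum. -/
lemma sum_antidiag_swap (F : ℕ → ℕ → ℝ) (N : ℕ) :
    ∑ n ∈ Ioc 0 N, ∑ x ∈ n.divisorsAntidiagonal, F x.1 x.2
      = ∑ m ∈ Ioc 0 N, ∑ k ∈ Ioc 0 (N / m), F m k := by
  have h1 : ∑ n ∈ Ioc 0 N, ∑ x ∈ n.divisorsAntidiagonal, F x.1 x.2
      = ∑ x ∈ (Ioc 0 N ×ˢ Ioc 0 N).filter (fun x => x.1 * x.2 ≤ N), F x.1 x.2 := by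
    trans ∑ n ∈ Ioc 0 N, ∑ x ∈ (Ioc 0 N ×ˢ Ioc 0 N).filter (fun x => x.1 * x.2 = n), F x.1 x.2
    · refine sum_congr rfl fun n hn ↦ ?_
      simp only [mem_Ioc] at hn
      rw [Nat.divisorsAntidiagonal_eq_prod_filter_of_le hn.1.ne' hn.2]
    · simp_rw [sum_filter]
      rw [sum_comm]
      exact sum_congr rfl fun _ _ ↦ (by simp_all)
  rw [h1, sum_filter, sum_product]
  refine sum_congr rfl fun n hn ↦ ?_
  rw [← sum_filter]
  congr 1
  ext k
  simp only [mem_filter, mem_Ioc, and_assoc, and_congr_right_iff] at hn ⊢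
  intro _
  rw [Nat.le_div_iff_mul_le hn.1, mul_comm k n]
  constructor
  · intro h; exact h.2
  · intro h; exact ⟨le_trans (Nat.le_mul_of_pos_left k hn.1) h, h⟩

lemma sum_conv (f g : ArithmeticFunction ℝ) (w : ℕ → ℝ) (N : ℕ) :
    ∑ n ∈ Ioc 0 N, (f * g) n * w n
      = ∑ m ∈ Ioc 0 N, ∑ k ∈ Ioc 0 (N / m), f m * g k * w (m * k) := by
  rw [← sum_antidiag_swap (fun m k => f m * g k * w (m * k))]
  refine sum_congr rfl fun n _ => ?_
  rw [ArithmeticFunction.mul_apply, sum_mul]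
  refine sum_congr rfl fun x hx => ?_
  rw [(Nat.mem_divisorsAntidiagonal.1 hx).1]

noncomputable def tau (n : ℕ) : ℝ := (n.divisors.card : ℝ)

lemma tau_nonneg (n : ℕ) : 0 ≤ tau n := by unfold tau; positivity

lemma tau_eq (n : ℕ) : tau n = ∑ _x ∈ n.divisorsAntidiagonal, (1 : ℝ) := by
  unfold tau
  rw [sum_const, nsmul_eq_mul, mul_one, ← Nat.map_div_right_divisors, card_map]

lemma tau_mul_le (m n : ℕ) : tau (m * n) ≤ tau m * tau n := by
  unfold tau
  rw [Nat.divisors_mul]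
  exact_mod_cast card_mul_le

lemma tau_le_of_dvd {m n : ℕ} (h : m ∣ n) (hn : n ≠ 0) : tau m ≤ tau n := by
  unfold tau
  exact_mod_cast card_le_card (Nat.divisors_subset_of_dvd hn h)

lemma harm_le (X N : ℕ) (hX : X ≤ N) : ∑ d ∈ Ioc 0 X, (1 : ℝ) / d ≤ 1 + Real.log N := by
  have h1 : ∑ d ∈ Ioc 0 X, (1 : ℝ) / d = (harmonic X : ℝ) := by
    rw [harmonic_eq_sum_Icc]; push_cast
    refine sum_congr ?_ fun d _ => one_div _
    ext d; simp only [mem_Ioc, mem_Icc]; omega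
  rw [h1]
  have := log_mono_nat hX
  simp only at this
  linarith [harmonic_le_one_add_log X]

lemma sum_tau_le (X N : ℕ) (hX : X ≤ N) : ∑ n ∈ Ioc 0 X, tau n ≤ X * (1 + Real.log N) := by
  simp_rw [tau_eq]
  rw [sum_antidiag_swap (fun _ _ => (1 : ℝ))]
  refine le_trans ?_ (mul_le_mul_of_nonneg_left (harm_le X N hX) (Nat.cast_nonneg X))
  rw [mul_sum]
  refine sum_le_sum fun d hd => ?_
  simp only [sum_const, Nat.card_Ioc, tsub_zero, nsmul_eq_mul, mul_one]
  rw [mul_one_div]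
  exact Nat.cast_div_le

lemma sum_tau_div_le (N : ℕ) : ∑ n ∈ Ioc 0 N, tau n / n ≤ (1 + Real.log N) ^ 2 := by
  have h1 : ∀ n ∈ Ioc 0 N, tau n / n = ∑ x ∈ n.divisorsAntidiagonal, (1 : ℝ) / x.1 * (1 / x.2) := by
    intro n _
    rw [tau_eq, sum_div]
    refine sum_congr rfl fun x hx => ?_
    rw [← (Nat.mem_divisorsAntidiagonal.1 hx).1]; push_cast
    rw [one_div_mul_one_div]
  rw [sum_congr rfl h1, sum_antidiag_swap (fun m k => (1 : ℝ) / m * (1 / k)), sq]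
  have hl : 0 ≤ 1 + Real.log N := by linarith [Real.log_natCast_nonneg N]
  calc _ ≤ ∑ m ∈ Ioc 0 N, (1 : ℝ) / m * (1 + Real.log N) := by
        refine sum_le_sum fun m _ => ?_
        rw [← mul_sum]
        gcongr
        exact harm_le _ _ (Nat.div_le_self _ _)
    _ ≤ _ := by
        rw [← sum_mul]
        gcongr
        exact harm_le _ _ le_rfl

lemma sum_tau_sq_le (N : ℕ) : ∑ n ∈ Ioc 0 N, tau n ^ 2 ≤ N * (1 + Real.log N) ^ 3 := by
  have hl : 0 ≤ 1 + Real.log N := by linarith [Real.log_natCast_nonneg N]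
  have h1 : ∀ n ∈ Ioc 0 N, tau n ^ 2 = ∑ x ∈ n.divisorsAntidiagonal, tau (x.1 * x.2) := by
    intro n _
    have : ∑ x ∈ n.divisorsAntidiagonal, tau (x.1 * x.2) = ∑ x ∈ n.divisorsAntidiagonal, 1 * tau n :=
      sum_congr rfl fun x hx => by rw [(Nat.mem_divisorsAntidiagonal.1 hx).1, one_mul]
    rw [this, ← sum_mul, ← tau_eq, sq]
  rw [sum_congr rfl h1, sum_antidiag_swap (fun m k => tau (m * k))]
  calc _ ≤ ∑ m ∈ Ioc 0 N, tau m * ((N : ℝ) / m * (1 + Real.log N)) := by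
        refine sum_le_sum fun m _ => ?_
        calc _ ≤ ∑ k ∈ Ioc 0 (N / m), tau m * tau k := sum_le_sum fun k _ => tau_mul_le m k
          _ = tau m * ∑ k ∈ Ioc 0 (N / m), tau k := by rw [mul_sum]
          _ ≤ tau m * (((N / m : ℕ) : ℝ) * (1 + Real.log N)) :=
              mul_le_mul_of_nonneg_left (sum_tau_le _ _ (Nat.div_le_self _ _)) (tau_nonneg m)
          _ ≤ _ := by
              have := tau_nonneg m
              gcongr
              exact Nat.cast_div_le
    _ = N * (1 + Real.log N) * ∑ m ∈ Ioc 0 N, tau m / m := by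
        rw [mul_sum]; exact sum_congr rfl fun m _ => by ring
    _ ≤ N * (1 + Real.log N) * (1 + Real.log N) ^ 2 := by
        gcongr; exact sum_tau_div_le N
    _ = _ := by ring

end

section
open Finset

lemma af_sub_apply (f g : ArithmeticFunction ℝ) (n : ℕ) : (f - g) n = f n - g n := by
  have : (f - g + g) n = f n := by rw [sub_add_cancel]
  rw [ArithmeticFunction.add_apply] at this
  linarith

/-- truncation of an arithmetic function -/
noncomputable def trunc (f : ArithmeticFunction ℝ) (U : ℕ) : ArithmeticFunction ℝ :=
  ⟨fun n => if n ≤ U then f n else 0, by simp⟩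

lemma trunc_apply (f : ArithmeticFunction ℝ) (U n : ℕ) :
    trunc f U n = if n ≤ U then f n else 0 := rfl

noncomputable def afL : ArithmeticFunction ℝ := ArithmeticFunction.vonMangoldt
noncomputable def afM : ArithmeticFunction ℝ := (ArithmeticFunction.moebius : ArithmeticFunction ℝ)
noncomputable def afZ : ArithmeticFunction ℝ := (ArithmeticFunction.zeta : ArithmeticFunction ℝ)
noncomputable def afA (V : ℕ) : ArithmeticFunction ℝ := afL - trunc afL V
noncomputable def afB (U : ℕ) : ArithmeticFunction ℝ := (afM - trunc afM U) * afZ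

lemma vaughan (U V : ℕ) : afL = trunc afL V + trunc afM U * ArithmeticFunction.log
    - (trunc afL V * trunc afM U) * afZ + afA V * afB U := by
  have h1 : afL * afZ = ArithmeticFunction.log := ArithmeticFunction.vonMangoldt_mul_zeta
  have h2 : afM * afZ = 1 := ArithmeticFunction.coe_moebius_mul_coe_zeta
  unfold afA afB
  linear_combination (afL * (-1) + trunc afL V) * h2 + trunc afM U * h1

lemma afM_abs_le (n : ℕ) : |afM n| ≤ 1 := by
  unfold afM
  rw [ArithmeticFunction.intCoe_apply]
  have := ArithmeticFunction.abs_moebius_le_one (n := n)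
  exact_mod_cast this

lemma afL_nonneg (n : ℕ) : 0 ≤ afL n := ArithmeticFunction.vonMangoldt_nonneg
lemma afL_le_log (n : ℕ) : afL n ≤ Real.log n := ArithmeticFunction.vonMangoldt_le_log
lemma afL_sum (n : ℕ) : ∑ d ∈ n.divisors, afL d = Real.log n := ArithmeticFunction.vonMangoldt_sum

lemma trunc_abs_le (f : ArithmeticFunction ℝ) (U n : ℕ) : |trunc f U n| ≤ |f n| := by
  rw [trunc_apply]; split_ifs <;> simp

lemma sum_ite_le (N V : ℕ) (C : ℝ) (hC : 0 ≤ C) :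
    ∑ n ∈ Ioc 0 N, (if n ≤ V then C else 0) ≤ V * C := by
  rw [← sum_filter, sum_const, nsmul_eq_mul]
  gcongr
  calc _ ≤ (Ioc 0 V).card := card_le_card (by intro n; simp only [mem_filter, mem_Ioc]; omega)
    _ = V := by simp

lemma abs_ww_le_one (q : ℕ) (hq : q.Prime) (n : ℕ) : |ww q n| ≤ 1 := abs_wz_le_one q hq _

lemma natCast_ne_zero_of_lt (q m : ℕ) (h0 : 0 < m) (h : m < q) : (m : ZMod q) ≠ 0 := by
  rw [Ne, ZMod.natCast_eq_zero_iff]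
  intro hd
  exact absurd (Nat.le_of_dvd h0 hd) (by omega)

lemma typeI_total (q : ℕ) (hq : q.Prime) (U V N : ℕ) (hU : 1 ≤ U) (hV : 1 ≤ V)
    (hUV : U * V < q) :
    |∑ n ∈ Ioc 0 N, afL n * ww q n| ≤ |∑ n ∈ Ioc 0 N, (afA V * afB U) n * ww q n|
      + 7 * (U * V) * Real.log N := by
  have hlN : 0 ≤ Real.log N := Real.log_natCast_nonneg N
  have hUq : U < q := lt_of_le_of_lt (Nat.le_mul_of_pos_right U hV) hUV
  have e : ∑ n ∈ Ioc 0 N, afL n * ww q n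
      = ∑ n ∈ Ioc 0 N, trunc afL V n * ww q n
      + ∑ n ∈ Ioc 0 N, (trunc afM U * ArithmeticFunction.log) n * ww q n
      - ∑ n ∈ Ioc 0 N, ((trunc afL V * trunc afM U) * afZ) n * ww q n
      + ∑ n ∈ Ioc 0 N, (afA V * afB U) n * ww q n := by
    rw [← sum_add_distrib, ← sum_sub_distrib, ← sum_add_distrib]
    refine sum_congr rfl fun n _ => ?_
    conv_lhs => rw [vaughan U V]
    rw [ArithmeticFunction.add_apply, af_sub_apply, ArithmeticFunction.add_apply]
    ring
  have b1 : |∑ n ∈ Ioc 0 N, trunc afL V n * ww q n| ≤ V * Real.log N := by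
    refine (abs_sum_le_sum_abs _ _).trans (le_trans (sum_le_sum fun n hn => ?_)
      (sum_ite_le N V _ hlN))
    rw [abs_mul, trunc_apply]
    split_ifs
    · rw [abs_of_nonneg (afL_nonneg n)]
      have h1 := afL_le_log n
      have h2 : Real.log n ≤ Real.log N := log_mono_nat (mem_Ioc.1 hn).2
      have h3 := mul_le_mul (h1.trans h2) (abs_ww_le_one q hq n) (abs_nonneg _) hlN
      linarith
    · simp
  have b2 : |∑ n ∈ Ioc 0 N, (trunc afM U * ArithmeticFunction.log) n * ww q n|
      ≤ U * (4 * Real.log N) := by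
    rw [sum_conv]
    refine (abs_sum_le_sum_abs _ _).trans (le_trans (sum_le_sum fun m hm => ?_)
      (sum_ite_le N U _ (by positivity)))
    simp_rw [mul_assoc]
    rw [← mul_sum, abs_mul, trunc_apply]
    split_ifs with h
    · have h1 := typeI_log_sum q hq m (natCast_ne_zero_of_lt q m (mem_Ioc.1 hm).1 (by omega)) (N / m)
      have h2 : Real.log ((N / m : ℕ) : ℝ) ≤ Real.log N := log_mono_nat (Nat.div_le_self N m)
      have h3 := mul_le_mul (afM_abs_le m) h1 (abs_nonneg _) zero_le_one
      simp only [ArithmeticFunction.log_apply]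
      linarith
    · simp
  have b3 : |∑ n ∈ Ioc 0 N, ((trunc afL V * trunc afM U) * afZ) n * ww q n|
      ≤ (U * V : ℕ) * (2 * Real.log N) := by
    rw [sum_conv]
    refine (abs_sum_le_sum_abs _ _).trans (le_trans (sum_le_sum fun m hm => ?_)
      (sum_ite_le N (U * V) _ (by positivity)))
    have e1 : ∑ k ∈ Ioc 0 (N / m), (trunc afL V * trunc afM U) m * afZ k * ww q (m * k)
        = (trunc afL V * trunc afM U) m * ∑ k ∈ Ioc 0 (N / m), ww q (m * k) := by
      rw [mul_sum]
      refine sum_congr rfl fun k hk => ?_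
      have : afZ k = 1 := by
        unfold afZ
        rw [ArithmeticFunction.natCoe_apply, ArithmeticFunction.zeta_apply_ne (mem_Ioc.1 hk).1.ne']
        simp
      rw [this, mul_one]
    rw [e1, abs_mul]
    split_ifs with h
    · have h1 := typeI_sum q hq m (natCast_ne_zero_of_lt q m (mem_Ioc.1 hm).1 (by omega)) (N / m)
      have h2 : |(trunc afL V * trunc afM U) m| ≤ Real.log N := by
        rw [ArithmeticFunction.mul_apply]
        calc _ ≤ ∑ x ∈ m.divisorsAntidiagonal, afL x.1 := by
              refine (abs_sum_le_sum_abs _ _).trans (sum_le_sum fun x _ => ?_)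
              rw [abs_mul]
              have h3 := mul_le_mul (trunc_abs_le afL V x.1)
                ((trunc_abs_le afM U x.2).trans (afM_abs_le x.2)) (abs_nonneg _) (abs_nonneg _)
              rw [abs_of_nonneg (afL_nonneg x.1)] at h3
              linarith
          _ = Real.log m := by
              rw [Nat.sum_divisorsAntidiagonal (fun d _ => afL d), afL_sum]
          _ ≤ _ := log_mono_nat (mem_Ioc.1 hm).2
      have h3 := mul_le_mul h2 h1 (abs_nonneg _) hlN
      linarith
    · have : (trunc afL V * trunc afM U) m = 0 := by
        rw [ArithmeticFunction.mul_apply]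
        refine sum_eq_zero fun x hx => ?_
        rw [trunc_apply, trunc_apply]
        split_ifs with h1 h2
        · exfalso
          have := (Nat.mem_divisorsAntidiagonal.1 hx).1
          have h4 := Nat.mul_le_mul h1 h2
          rw [this, mul_comm V U] at h4
          exact h h4
        all_goals simp
      rw [this]; simp
  rw [e]
  have hU' : (1 : ℝ) ≤ U := by exact_mod_cast hU
  have hV' : (1 : ℝ) ≤ V := by exact_mod_cast hV
  push_cast at b3
  have c1 : (V : ℝ) * Real.log N ≤ (U * V) * Real.log N := by gcongr; nlinarith
  have c2 : (U : ℝ) * (4 * Real.log N) ≤ 4 * ((U * V) * Real.log N) := by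
    have : (U : ℝ) * Real.log N ≤ (U * V) * Real.log N := by gcongr; nlinarith
    linarith
  set S1 := ∑ n ∈ Ioc 0 N, trunc afL V n * ww q n
  set S2 := ∑ n ∈ Ioc 0 N, (trunc afM U * ArithmeticFunction.log) n * ww q n
  set S3 := ∑ n ∈ Ioc 0 N, ((trunc afL V * trunc afM U) * afZ) n * ww q n
  set S4 := ∑ n ∈ Ioc 0 N, (afA V * afB U) n * ww q n
  have t1 := abs_add_le (S1 + S2 - S3) S4
  have t2 := abs_sub (S1 + S2) S3
  have t3 := abs_add_le S1 S2
  linarith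

lemma afA_apply (V n : ℕ) : afA V n = if n ≤ V then 0 else afL n := by
  unfold afA; rw [af_sub_apply, trunc_apply]; split_ifs <;> simp

lemma afA_nonneg (V n : ℕ) : 0 ≤ afA V n := by
  rw [afA_apply]; split_ifs; exacts [le_rfl, afL_nonneg n]

lemma afA_le (V n : ℕ) : afA V n ≤ afL n := by
  rw [afA_apply]; split_ifs; exacts [afL_nonneg n, le_rfl]

lemma afB_abs_le (U n : ℕ) : |afB U n| ≤ tau n := by
  unfold afB
  rw [ArithmeticFunction.mul_apply, tau_eq]
  refine (abs_sum_le_sum_abs _ _).trans (sum_le_sum fun x hx => ?_)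
  rw [abs_mul, af_sub_apply, trunc_apply]
  have h2 : |afZ x.2| ≤ 1 := by
    unfold afZ
    rw [ArithmeticFunction.natCoe_apply, ArithmeticFunction.zeta_apply]
    split_ifs <;> simp
  have h1 : |afM x.1 - if x.1 ≤ U then afM x.1 else 0| ≤ 1 := by
    split_ifs
    · simp
    · simpa using afM_abs_le x.1
  have := mul_le_mul h1 h2 (abs_nonneg _) zero_le_one
  linarith

lemma afB_zero (U n : ℕ) (h : n ≤ U) : afB U n = 0 := by
  unfold afB
  rw [ArithmeticFunction.mul_apply]
  refine sum_eq_zero fun x hx => ?_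
  have h1 := Nat.mem_divisorsAntidiagonal.1 hx
  have h2 : x.1 ≤ n := Nat.le_of_dvd (Nat.pos_of_ne_zero h1.2) ⟨x.2, h1.1.symm⟩
  rw [af_sub_apply, trunc_apply, if_pos (h2.trans h)]
  simp

end

section
open Finset

lemma sum_blocks (f : ℕ → ℕ) (hf : Monotone f) (F : ℕ → ℝ) (K : ℕ) :
    ∑ m ∈ Ioc (f 0) (f K), F m = ∑ i ∈ range K, ∑ m ∈ Ioc (f i) (f (i + 1)), F m := by
  induction K with
  | zero => simp
  | succ K ih =>
    rw [sum_range_succ, ← ih, sum_Ioc_consecutive _ (hf (Nat.zero_le K)) (hf (Nat.le_succ K))]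

lemma sum_AB_le (V n : ℕ) :
    ∑ x ∈ n.divisorsAntidiagonal, afA V x.1 * tau x.2 ≤ tau n * Real.log n := by
  calc _ ≤ ∑ x ∈ n.divisorsAntidiagonal, afL x.1 * tau n := by
        refine sum_le_sum fun x hx => ?_
        have h1 := Nat.mem_divisorsAntidiagonal.1 hx
        exact mul_le_mul (afA_le V x.1) (tau_le_of_dvd ⟨x.1, by rw [mul_comm]; exact h1.1.symm⟩ h1.2)
          (tau_nonneg _) (afL_nonneg _)
    _ = _ := by
        rw [← sum_mul, Nat.sum_divisorsAntidiagonal (fun d _ => afL d), afL_sum, mul_comm]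

lemma decouple (U V N K : ℕ) (hV : 1 ≤ V) (l : ℝ) (hl : 1 < l) (hK : (N : ℝ) ≤ l ^ K) (w : ℕ → ℝ) :
    |∑ n ∈ Ioc 0 N, (afA V * afB U) n * w n| ≤
      ∑ i ∈ range K, |∑ m ∈ Ioc ⌊l ^ i⌋₊ ⌊l ^ (i + 1)⌋₊, ∑ k ∈ Ioc 0 (N / ⌊l ^ (i + 1)⌋₊),
        afA V m * afB U k * w (m * k)|
      + ∑ n ∈ Ioc 0 N, if (N : ℝ) < l * n then tau n * Real.log n * |w n| else 0 := by
  set f : ℕ → ℕ := fun i => ⌊l ^ i⌋₊ with hfdef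
  have hfm : Monotone f := fun a b hab => Nat.floor_mono (pow_le_pow_right₀ hl.le hab)
  have hf0 : f 0 = 1 := by simp [hfdef]
  have hf1 : ∀ i, 1 ≤ f i := fun i => hf0 ▸ hfm (Nat.zero_le i)
  have hfK : N ≤ f K := Nat.le_floor hK
  set H : ℕ → ℕ → ℝ := fun m k => afA V m * afB U k * w (m * k) with hH
  set G : ℕ → ℕ → ℝ := fun m k => if (N : ℝ) < l * ((m * k : ℕ) : ℝ) then afA V m * tau k * |w (m * k)| else 0 with hG
  have hG0 : ∀ m k, 0 ≤ G m k := by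
    intro m k; simp only [hG]; split_ifs
    · have := afA_nonneg V m; have := tau_nonneg k; positivity
    · exact le_rfl
  have ext : ∀ F : ℕ → ℕ → ℝ, (∀ k, F 1 k = 0) → ∑ m ∈ Ioc 0 N, ∑ k ∈ Ioc 0 (N / m), F m k
      = ∑ i ∈ range K, ∑ m ∈ Ioc (f i) (f (i + 1)), ∑ k ∈ Ioc 0 (N / m), F m k := by
    intro F hF
    rw [← sum_blocks f hfm (fun m => ∑ k ∈ Ioc 0 (N / m), F m k), hf0]
    have h1 : ∑ m ∈ Ioc 0 N, ∑ k ∈ Ioc 0 (N / m), F m k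
        = ∑ m ∈ Ioc 0 (f K), ∑ k ∈ Ioc 0 (N / m), F m k := by
      refine sum_subset (Ioc_subset_Ioc_right hfK) fun m hm hm' => ?_
      have : N < m := by simp only [mem_Ioc] at hm hm'; omega
      rw [Nat.div_eq_of_lt this]; simp
    rw [h1, ← sum_Ioc_consecutive _ (Nat.zero_le 1) (hf1 K)]
    simp [hF]
  have hA1 : afA V 1 = 0 := by rw [afA_apply, if_pos hV]
  rw [sum_conv, ext H (fun k => by simp [hH, hA1])]
  have b : ∑ n ∈ Ioc 0 N, (if (N : ℝ) < l * n then tau n * Real.log n * |w n| else 0)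
      ≥ ∑ i ∈ range K, ∑ m ∈ Ioc (f i) (f (i + 1)), ∑ k ∈ Ioc 0 (N / m), G m k := by
    rw [← ext G (fun k => by simp [hG, hA1]), ← sum_antidiag_swap G]
    refine sum_le_sum fun n hn => ?_
    have : ∀ x ∈ n.divisorsAntidiagonal, G x.1 x.2
        = if (N : ℝ) < l * n then afA V x.1 * tau x.2 * |w n| else 0 := by
      intro x hx
      simp only [hG, (Nat.mem_divisorsAntidiagonal.1 hx).1]
    rw [sum_congr rfl this]
    split_ifs
    · rw [← sum_mul]
      exact mul_le_mul_of_nonneg_right (sum_AB_le V n) (abs_nonneg _)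
    · simp
  refine le_trans ?_ (add_le_add_right b _)
  rw [← sum_add_distrib]
  refine (abs_sum_le_sum_abs _ _).trans (sum_le_sum fun i _ => ?_)
  have split : ∑ m ∈ Ioc (f i) (f (i + 1)), ∑ k ∈ Ioc 0 (N / m), H m k
      = ∑ m ∈ Ioc (f i) (f (i + 1)), ∑ k ∈ Ioc 0 (N / f (i + 1)), H m k
      + ∑ m ∈ Ioc (f i) (f (i + 1)), ∑ k ∈ Ioc (N / f (i + 1)) (N / m), H m k := by
    rw [← sum_add_distrib]
    refine sum_congr rfl fun m hm => ?_
    have h1 := mem_Ioc.1 hm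
    rw [sum_Ioc_consecutive _ (Nat.zero_le _) (Nat.div_le_div_left h1.2 (by omega))]
  rw [split]
  refine (abs_add_le _ _).trans (add_le_add le_rfl ?_)
  refine (abs_sum_le_sum_abs _ _).trans (sum_le_sum fun m hm => ?_)
  refine (abs_sum_le_sum_abs _ _).trans ?_
  calc _ ≤ ∑ k ∈ Ioc (N / f (i + 1)) (N / m), G m k := by
        refine sum_le_sum fun k hk => ?_
        have h1 := mem_Ioc.1 hm
        have h2 := mem_Ioc.1 hk
        have h3 : N < k * f (i + 1) := (Nat.div_lt_iff_lt_mul (hf1 _)).1 h2.1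
        have h4 : l ^ i < m := (Nat.floor_lt (by positivity)).1 h1.1
        have h5 : (f (i + 1) : ℝ) ≤ l ^ (i + 1) := Nat.floor_le (by positivity)
        have h6 : (N : ℝ) < k * f (i + 1) := by exact_mod_cast h3
        have h7 : (N : ℝ) < l * ((m * k : ℕ) : ℝ) := by
          push_cast
          calc (N : ℝ) < k * f (i + 1) := h6
            _ ≤ k * (l ^ i * l) := by rw [← pow_succ]; gcongr
            _ ≤ k * (m * l) := by gcongr
            _ = _ := by ring
        simp only [hG, hH]
        rw [if_pos h7, abs_mul, abs_mul, abs_of_nonneg (afA_nonneg V m)]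
        have := afB_abs_le U k
        have := afA_nonneg V m
        gcongr
    _ ≤ _ := sum_le_sum_of_subset_of_nonneg (Ioc_subset_Ioc_left (Nat.zero_le _))
          (fun k _ _ => hG0 m k)

lemma block_bound (Qs : Finset ℕ) (Q : ℕ) (Q0 : ℝ) (hQ0 : 0 < Q0) (hQ1 : 1 ≤ Q)
    (hQ : ∀ q ∈ Qs, q.Prime ∧ q ≤ Q ∧ Q0 ≤ q) (U N x y : ℕ) (hU : 1 ≤ U) (G : ℝ)
    (hG : G = 1 + 2 * (Q ^ 2 * (2 + Real.log (Q ^ 2)))) :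
    ∑ q ∈ Qs, |∑ m ∈ Ioc y x, ∑ k ∈ Ioc 0 (N / x), afA U m * afB U k * ww q (m * k)|
      ≤ 1 / Q0 * √(N * (1 + Real.log N) ^ 5 * (N + 2 * G * N / U + G ^ 2)) := by
  have hlN : 0 ≤ Real.log N := Real.log_natCast_nonneg N
  have hlQ : 0 ≤ Real.log ((Q : ℝ) ^ 2) := Real.log_nonneg (by
    have : (1 : ℝ) ≤ Q := by exact_mod_cast hQ1
    nlinarith)
  have hG1 : 1 ≤ G := by rw [hG]; have : 0 ≤ 2 * ((Q : ℝ) ^ 2 * (2 + Real.log (Q ^ 2))) := by positivity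
                         linarith
  have hU' : (1 : ℝ) ≤ U := by exact_mod_cast hU
  have hR : 0 ≤ 1 / Q0 * √(N * (1 + Real.log N) ^ 5 * (N + 2 * G * N / U + G ^ 2)) := by positivity
  by_cases hx : x ≤ U
  · refine le_trans (le_of_eq (sum_eq_zero fun q _ => ?_)) hR
    rw [abs_eq_zero]
    refine sum_eq_zero fun m hm => sum_eq_zero fun k _ => ?_
    rw [afA_apply, if_pos ((mem_Ioc.1 hm).2.trans hx)]; ring
  by_cases hY : N / x ≤ U
  · refine le_trans (le_of_eq (sum_eq_zero fun q _ => ?_)) hR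
    rw [abs_eq_zero]
    refine sum_eq_zero fun m hm => sum_eq_zero fun k hk => ?_
    rw [afB_zero U k ((mem_Ioc.1 hk).2.trans hY)]; ring
  push Not at hx hY
  set Y := N / x with hYdef
  have hxY : x * Y ≤ N := Nat.mul_div_le N x
  have hxN : x ≤ N := le_trans (Nat.le_mul_of_pos_right x (by omega)) hxY
  have hYN : Y ≤ N := Nat.div_le_self N x
  have key := bilinear_large Qs Q Q0 hQ0 hQ1 hQ (x + 1) (Y + 1)
    (fun m => if m ∈ Ioc y x then afA U m else 0) (fun k => afB U k)
  have e : ∀ q, ∑ m ∈ Ioc y x, ∑ k ∈ Ioc 0 Y, afA U m * afB U k * ww q (m * k)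
      = ∑ m ∈ range (x + 1), ∑ n ∈ range (Y + 1),
        (if m ∈ Ioc y x then afA U m else 0) * afB U n * ww q (m * n) := by
    intro q
    have h1 : Ioc y x = (range (x + 1)).filter (fun m => m ∈ Ioc y x) := by
      ext m; simp only [mem_filter, mem_range, mem_Ioc]; omega
    conv_lhs => rw [h1]
    rw [sum_filter]
    refine sum_congr rfl fun m _ => ?_
    rw [range_succ_Ioc Y, sum_insert (by simp), afB_zero U 0 (Nat.zero_le U)]
    split_ifs <;> simp
  simp_rw [e]
  refine key.trans ?_
  refine mul_le_mul_of_nonneg_left (Real.sqrt_le_sqrt ?_) (by positivity)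
  have s1 : ∑ m ∈ range (x + 1), (if m ∈ Ioc y x then afA U m else 0) ^ 2
      ≤ x * (1 + Real.log N) ^ 2 := by
    rw [range_succ_Ioc, sum_insert (by simp)]
    simp only [mem_Ioc, not_lt_zero, false_and, if_false]
    have : ∑ m ∈ Ioc 0 x, (1 + Real.log N) ^ 2 = x * (1 + Real.log N) ^ 2 := by simp
    rw [← this, zero_pow (by norm_num), zero_add]
    refine sum_le_sum fun m hm => ?_
    split_ifs
    · have h1 := afA_nonneg U m
      have h2 := (afA_le U m).trans (afL_le_log m)
      have h3 : Real.log m ≤ Real.log N := log_mono_nat ((mem_Ioc.1 hm).2.trans hxN)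
      gcongr
      linarith
    · rw [zero_pow (by norm_num)]; positivity
  have s2 : ∑ n ∈ range (Y + 1), afB U n ^ 2 ≤ Y * (1 + Real.log N) ^ 3 := by
    rw [range_succ_Ioc, sum_insert (by simp), afB_zero U 0 (Nat.zero_le U), zero_pow (by norm_num),
      zero_add]
    calc _ ≤ ∑ n ∈ Ioc 0 Y, tau n ^ 2 := by
          refine sum_le_sum fun n _ => ?_
          rw [← sq_abs]
          exact pow_le_pow_left₀ (abs_nonneg _) (afB_abs_le U n) 2
      _ ≤ _ := sum_tau_sq_le Y
      _ ≤ _ := by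
          have h3 : Real.log Y ≤ Real.log N := log_mono_nat hYN
          have := Real.log_natCast_nonneg Y
          gcongr
  have l1 : LS Q (x + 1) = x + G := by unfold LS; rw [hG]; push_cast; ring
  have l2 : LS Q (Y + 1) = Y + G := by unfold LS; rw [hG]; push_cast; ring
  rw [l1, l2]
  have hxY' : (x : ℝ) * Y ≤ N := by exact_mod_cast hxY
  have hx' : (U : ℝ) ≤ x := by exact_mod_cast hx.le
  have hy' : (U : ℝ) ≤ Y := by exact_mod_cast hY.le
  have hxb : (x : ℝ) ≤ N / U := by rw [le_div_iff₀ (by linarith)]; nlinarith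
  have hyb : (Y : ℝ) ≤ N / U := by rw [le_div_iff₀ (by linarith)]; nlinarith
  calc _ ≤ ((x + G) * (x * (1 + Real.log N) ^ 2)) * ((Y + G) * (Y * (1 + Real.log N) ^ 3)) := by
        gcongr
    _ = (x * Y) * (1 + Real.log N) ^ 5 * (x * Y + G * x + G * Y + G ^ 2) := by ring
    _ ≤ N * (1 + Real.log N) ^ 5 * (N + G * (N / U) + G * (N / U) + G ^ 2) := by
        gcongr
    _ = _ := by ring

lemma typeII_total (Qs : Finset ℕ) (Q : ℕ) (Q0 : ℝ) (hQ0 : 0 < Q0) (hQ1 : 1 ≤ Q)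
    (hQ : ∀ q ∈ Qs, q.Prime ∧ q ≤ Q ∧ Q0 ≤ q) (U N K : ℕ) (hU : 1 ≤ U) (G : ℝ)
    (hG : G = 1 + 2 * (Q ^ 2 * (2 + Real.log (Q ^ 2)))) (d : ℝ) (hd : 0 < d)
    (hK : (N : ℝ) ≤ (1 + d) ^ K) (R : ℝ) (hR0 : 0 ≤ R)
    (hR : ∀ n ∈ Ioc 0 N, (N : ℝ) < (1 + d) * n → ∑ q ∈ Qs, |ww q n| ≤ R) :
    ∑ q ∈ Qs, |∑ n ∈ Ioc 0 N, (afA U * afB U) n * ww q n|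
      ≤ K / Q0 * √(N * (1 + Real.log N) ^ 5 * (N + 2 * G * N / U + G ^ 2))
        + R * (1 + Real.log N) * √((N * d + 1) * (N * (1 + Real.log N) ^ 3)) := by
  have hlN : 0 ≤ Real.log N := Real.log_natCast_nonneg N
  calc _ ≤ ∑ q ∈ Qs, (∑ i ∈ range K, |∑ m ∈ Ioc ⌊(1 + d) ^ i⌋₊ ⌊(1 + d) ^ (i + 1)⌋₊,
        ∑ k ∈ Ioc 0 (N / ⌊(1 + d) ^ (i + 1)⌋₊), afA U m * afB U k * ww q (m * k)|
      + ∑ n ∈ Ioc 0 N, if (N : ℝ) < (1 + d) * n then tau n * Real.log n * |ww q n| else 0) :=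
        sum_le_sum fun q _ => decouple U U N K hU (1 + d) (by linarith) hK (ww q)
    _ ≤ _ := by
        rw [sum_add_distrib]
        refine add_le_add ?_ ?_
        · rw [sum_comm]
          refine (sum_le_sum fun i _ => block_bound Qs Q Q0 hQ0 hQ1 hQ U N _ _ hU G hG).trans ?_
          rw [sum_const, card_range, nsmul_eq_mul]
          apply le_of_eq; ring
        · rw [sum_comm]
          set S := (Ioc 0 N).filter (fun n : ℕ => (N : ℝ) < (1 + d) * n) with hS
          have h1 : ∑ n ∈ Ioc 0 N, ∑ q ∈ Qs,
              (if (N : ℝ) < (1 + d) * n then tau n * Real.log n * |ww q n| else 0)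
              ≤ R * (1 + Real.log N) * ∑ n ∈ S, 1 * tau n := by
            rw [hS, sum_filter, mul_sum]
            refine sum_le_sum fun n hn => ?_
            split_ifs with h
            · rw [← mul_sum]
              have h2 := hR n hn h
              have h3 : Real.log n ≤ 1 + Real.log N := by
                have : Real.log n ≤ Real.log N := log_mono_nat (mem_Ioc.1 hn).2
                linarith
              have h4 := tau_nonneg n
              have h5 := Real.log_natCast_nonneg n
              calc tau n * Real.log n * ∑ q ∈ Qs, |ww q n| ≤ tau n * (1 + Real.log N) * R := by gcongr
                _ = _ := by ring
            · simp
          refine h1.trans (mul_le_mul_of_nonneg_left ?_ (by positivity))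
          apply Real.le_sqrt_of_sq_le
          refine (sum_mul_sq_le_sq_mul_sq S (fun _ => 1) tau).trans ?_
          have c1 : ∑ n ∈ S, (1 : ℝ) ^ 2 ≤ N * d + 1 := by
            simp only [one_pow, sum_const, nsmul_eq_mul, mul_one]
            set j := ⌊(N : ℝ) / (1 + d)⌋₊ with hj
            have hjN : j ≤ N := by
              rw [hj]; apply Nat.floor_le_of_le
              rw [div_le_iff₀ (by linarith)]
              have : (0 : ℝ) ≤ N := Nat.cast_nonneg N
              nlinarith
            have h2 : S ⊆ Ioc j N := by
              intro n hn
              simp only [hS, mem_filter, mem_Ioc] at hn ⊢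
              refine ⟨?_, hn.1.2⟩
              rw [hj, Nat.floor_lt (by positivity), div_lt_iff₀ (by linarith)]
              linarith [hn.2]
            have h3 : (S.card : ℝ) ≤ (N : ℝ) - j := by
              rw [← Nat.cast_sub hjN, ← Nat.card_Ioc j N]
              exact_mod_cast card_le_card h2
            have h4 : (N : ℝ) / (1 + d) < j + 1 := Nat.lt_floor_add_one _
            have h5 : (N : ℝ) - N * d ≤ N / (1 + d) := by
              rw [le_div_iff₀ (by linarith)]
              have : (0 : ℝ) ≤ N := Nat.cast_nonneg N
              nlinarith [mul_nonneg this (sq_nonneg d)]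
            linarith
          have c2 : ∑ n ∈ S, tau n ^ 2 ≤ N * (1 + Real.log N) ^ 3 :=
            (sum_le_sum_of_subset_of_nonneg (filter_subset _ _)
              (fun n _ _ => sq_nonneg _)).trans (sum_tau_sq_le N)
          exact mul_le_mul c1 c2 (sum_nonneg fun n _ => sq_nonneg _) (by positivity)

end

section
open Finset

lemma cast_eq_one_iff (q n : ℕ) (hn : 1 ≤ n) : (n : ZMod q) = 1 ↔ q ∣ n - 1 := by
  rw [← ZMod.natCast_eq_zero_iff, Nat.cast_sub hn, Nat.cast_one, sub_eq_zero]

lemma mult_le (Qs : Finset ℕ) (Q0 : ℝ) (hQ0 : 1 ≤ Q0) (hQ : ∀ q ∈ Qs, q.Prime ∧ Q0 ≤ q)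
    (N n : ℕ) (hN : (N : ℝ) < Q0 ^ 3) (hn2 : 2 ≤ n) (hn : n ≤ N) :
    (Qs.filter (fun q => (n : ZMod q) = 1)).card ≤ 2 := by
  by_contra hc
  push Not at hc
  set S := Qs.filter (fun q => (n : ZMod q) = 1) with hS
  have h1 : ∏ q ∈ S, q ∣ n - 1 := by
    refine Finset.prod_primes_dvd _ (fun q hq => ?_) (fun q hq => ?_)
    · exact (hQ q (mem_filter.1 hq).1).1.prime
    · exact (cast_eq_one_iff q n (by omega)).1 (mem_filter.1 hq).2
  have h2 := Nat.le_of_dvd (by omega) h1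
  have h3 : Q0 ^ S.card ≤ ∏ q ∈ S, (q : ℝ) := by
    rw [← prod_const]
    exact prod_le_prod (fun _ _ => by linarith) fun q hq => (hQ q (mem_filter.1 hq).1).2
  have h4 : Q0 ^ 3 ≤ Q0 ^ S.card := pow_le_pow_right₀ hQ0 hc
  have h5 : (∏ q ∈ S, (q : ℝ)) ≤ N := by
    have : ∏ q ∈ S, q ≤ N := by omega
    rw [← Nat.cast_prod]
    exact Nat.cast_le.2 this
  linarith

lemma sum_abs_ww_le (Qs : Finset ℕ) (Q0 : ℝ) (hQ0 : 1 < Q0) (hQ : ∀ q ∈ Qs, q.Prime ∧ Q0 ≤ q)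
    (N n : ℕ) (hN : (N : ℝ) < Q0 ^ 3) (hn2 : 2 ≤ n) (hn : n ≤ N) :
    ∑ q ∈ Qs, |ww q n| ≤ 2 + Qs.card / (Q0 - 1) := by
  calc _ ≤ ∑ q ∈ Qs, ((if (n : ZMod q) = 1 then (1 : ℝ) else 0) + 1 / (Q0 - 1)) := by
        refine sum_le_sum fun q hq => ?_
        refine (abs_wz_le q (hQ q hq).1 _).trans ?_
        have := (hQ q hq).2
        gcongr
    _ ≤ _ := by
        rw [sum_add_distrib, sum_const, nsmul_eq_mul, ← sum_filter, sum_const, nsmul_eq_mul]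
        have : ((Qs.filter (fun q => (n : ZMod q) = 1)).card : ℝ) ≤ 2 := by
          exact_mod_cast mult_le Qs Q0 hQ0.le hQ N n hN hn2 hn
        rw [mul_one_div]
        linarith

lemma main_ineq (Qs : Finset ℕ) (Q0 : ℝ) (hQ0 : 1 < Q0) (hQ : ∀ q ∈ Qs, q.Prime ∧ Q0 ≤ q)
    (N : ℕ) (hN : (N : ℝ) < Q0 ^ 3) (hN1 : 1 ≤ N) (hpsi : N / Q0 * Real.log N ≤ Chebyshev.psi N / 2) (E : ℝ)
    (hE : ∑ q ∈ Qs, |∑ n ∈ Ioc 0 N, afL n * ww q n| ≤ E) :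
    Chebyshev.psi N / 2 * ∑ q ∈ Qs, (1 : ℝ) / q ≤ E + 2 * Real.log N *
      ((Ioc 0 N).filter (fun n => n.Prime ∧ ∃ q ∈ Qs, q ∣ n - 1)).card
      + 2 * (Chebyshev.psi N - Chebyshev.theta N) := by
  have hlN : 0 ≤ Real.log N := Real.log_natCast_nonneg N
  have hψ : Chebyshev.psi N = ∑ n ∈ Ioc 0 N, afL n := by
    unfold Chebyshev.psi; rw [Nat.floor_natCast]; rfl
  -- step 1: lower bound for each q
  have s1 : ∀ q ∈ Qs, Chebyshev.psi N / 2 * (1 / q) ≤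
      |∑ n ∈ Ioc 0 N, afL n * ww q n| + ∑ n ∈ Ioc 0 N, (if (n : ZMod q) = 1 then afL n else 0) := by
    intro q hq
    have hp := (hQ q hq).1
    have hq0 := (hQ q hq).2
    have hq1 : (0 : ℝ) < (q : ℝ) - 1 := by linarith
    have : Fact q.Prime := ⟨hp⟩
    have e : ∑ n ∈ Ioc 0 N, afL n * ww q n = ∑ n ∈ Ioc 0 N, (if (n : ZMod q) = 1 then afL n else 0)
        - 1 / ((q : ℝ) - 1) * (∑ n ∈ Ioc 0 N, afL n - ∑ n ∈ Ioc 0 N, if (n : ZMod q) = 0 then afL n else 0) := by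
      rw [← sum_sub_distrib, mul_sum, ← sum_sub_distrib]
      refine sum_congr rfl fun n _ => ?_
      unfold ww wz
      split_ifs <;> ring
    have d : ∑ n ∈ Ioc 0 N, (if (n : ZMod q) = 0 then afL n else 0) ≤ Chebyshev.psi N / 2 := by
      refine le_trans ?_ hpsi
      calc _ ≤ ∑ n ∈ Ioc 0 N, (if q ∣ n then Real.log N else 0) := by
            refine sum_le_sum fun n hn => ?_
            simp only [ZMod.natCast_eq_zero_iff]
            split_ifs
            · exact (afL_le_log n).trans (log_mono_nat (mem_Ioc.1 hn).2)
            · exact le_rfl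
        _ = ((N / q : ℕ) : ℝ) * Real.log N := by
            rw [← sum_filter, sum_const, nsmul_eq_mul, Nat.Ioc_filter_dvd_card_eq_div]
        _ ≤ N / q * Real.log N := by gcongr; exact Nat.cast_div_le
        _ ≤ _ := by gcongr
    have h1 := neg_abs_le (∑ n ∈ Ioc 0 N, afL n * ww q n)
    have h2 : Chebyshev.psi N / 2 * (1 / q) ≤ 1 / ((q : ℝ) - 1) *
        (∑ n ∈ Ioc 0 N, afL n - ∑ n ∈ Ioc 0 N, if (n : ZMod q) = 0 then afL n else 0) := by
      rw [mul_comm]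
      have h3 := Chebyshev.psi_nonneg N
      have h4 : (1 : ℝ) / q ≤ 1 / ((q : ℝ) - 1) := one_div_le_one_div_of_le hq1 (by linarith)
      refine mul_le_mul h4 (by rw [← hψ]; linarith) (by positivity) (by positivity)
    linarith
  have s2 : Chebyshev.psi N / 2 * ∑ q ∈ Qs, (1 : ℝ) / q ≤ E +
      ∑ q ∈ Qs, ∑ n ∈ Ioc 0 N, (if (n : ZMod q) = 1 then afL n else 0) := by
    rw [mul_sum]
    refine (sum_le_sum s1).trans ?_
    rw [sum_add_distrib]
    linarith
  refine s2.trans ?_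
  rw [add_assoc]
  refine add_le_add le_rfl ?_
  rw [sum_comm]
  have s3 : Chebyshev.psi N - Chebyshev.theta N = ∑ n ∈ Ioc 0 N, if n.Prime then 0 else afL n := by
    rw [Chebyshev.psi_sub_theta_eq_sum_not_prime, sum_filter, Nat.floor_natCast]
    refine sum_congr rfl fun n _ => ?_
    by_cases h : n.Prime <;> simp [h, afL]
  have s4 : (((Ioc 0 N).filter (fun n => n.Prime ∧ ∃ q ∈ Qs, q ∣ n - 1)).card : ℝ)
      = ∑ n ∈ Ioc 0 N, if n.Prime ∧ ∃ q ∈ Qs, q ∣ n - 1 then 1 else 0 := by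
    rw [← sum_filter]; simp
  rw [s3, s4, mul_sum, mul_sum, ← sum_add_distrib]
  refine sum_le_sum fun n hn => ?_
  have hn' := mem_Ioc.1 hn
  rcases Nat.lt_or_ge n 2 with h1 | h1
  · have : n = 1 := by omega
    subst this
    have h0 : afL 1 = 0 := by unfold afL; simp
    simp [h0, Nat.not_prime_one]
  have hm := mult_le Qs Q0 hQ0.le hQ N n hN h1 hn'.2
  have hm' : ((Qs.filter (fun q => (n : ZMod q) = 1)).card : ℝ) ≤ 2 := by exact_mod_cast hm
  rw [← sum_filter, sum_const, nsmul_eq_mul]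
  have hL := afL_nonneg n
  have hL2 : afL n ≤ Real.log N := (afL_le_log n).trans (log_mono_nat hn'.2)
  by_cases hp : n.Prime
  · by_cases hex : ∃ q ∈ Qs, q ∣ n - 1
    · rw [if_pos ⟨hp, hex⟩, if_pos hp]
      have := mul_le_mul hm' hL2 hL (by norm_num)
      linarith
    · rw [if_neg (fun h => hex h.2), if_pos hp]
      have : Qs.filter (fun q => (n : ZMod q) = 1) = ∅ := by
        rw [filter_eq_empty_iff]
        intro q hq h
        exact hex ⟨q, hq, (cast_eq_one_iff q n (by omega)).1 h⟩
      rw [this]; simp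
  · rw [if_neg (fun h => hp h.1), if_neg hp]
    have := mul_le_mul_of_nonneg_right hm' hL
    linarith

end

section
open Finset Filter

lemma ev_log_le (r c : ℝ) (hr : 0 < r) (hc : 0 < c) : ∀ᶠ x : ℝ in atTop, Real.log x ≤ c * x ^ r := by
  filter_upwards [(isLittleO_log_rpow_atTop hr).bound hc, eventually_ge_atTop 1] with x hx hx1
  rw [Real.norm_of_nonneg (Real.log_nonneg hx1), Real.norm_of_nonneg (by positivity)] at hx
  exact hx

lemma psi_lower : ∀ᶠ x : ℝ in atTop, 0.68 * x ≤ Chebyshev.psi x := by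
  filter_upwards [ev_log_le 1 (1/1000) one_pos (by norm_num), eventually_ge_atTop 1000] with x h1 hx
  have h2 := Chebyshev.psi_ge' (x := x) (by linarith)
  have h3 : Real.log (x + 2) ≤ Real.log x + Real.log 2 := by
    rw [← Real.log_mul (by linarith) (by norm_num)]
    exact Real.log_le_log (by linarith) (by linarith)
  rw [Real.rpow_one] at h1
  have h4 := Real.log_two_gt_d9
  have h5 := Real.log_two_lt_d9
  nlinarith

lemma theta_scale : ∀ᶠ x : ℝ in atTop, x ≤ Chebyshev.theta (4 * x) - Chebyshev.theta x := by
  have h0 : Tendsto (fun x : ℝ => 4 * x) atTop atTop := tendsto_id.const_mul_atTop (by norm_num)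
  filter_upwards [h0.eventually (ev_log_le (1/2) (1/100) (by norm_num) (by norm_num)), h0.eventually psi_lower,
    eventually_ge_atTop 1000] with x h1 h2 hx
  have h3 := Chebyshev.theta_le_log4_mul_x (x := x) (by linarith)
  have h4 := Chebyshev.abs_psi_sub_theta_le_sqrt_mul_log (x := 4 * x) (by linarith)
  have h5 := (abs_le.1 h4).2
  have h6 : Real.log 4 = 2 * Real.log 2 := by
    rw [show (4 : ℝ) = 2 ^ 2 by norm_num, Real.log_pow]; norm_num
  have h7 := Real.log_two_lt_d9
  rw [← Real.sqrt_eq_rpow] at h1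
  have h8 : 2 * √(4 * x) * Real.log (4 * x) ≤ 2 * √(4 * x) * (1 / 100 * √(4 * x)) := by gcongr
  have h9 : √(4 * x) * √(4 * x) = 4 * x := Real.mul_self_sqrt (by linarith)
  have h10 : 2 * √(4 * x) * (1 / 100 * √(4 * x)) = 1 / 50 * (4 * x) := by
    linear_combination (1 / 50) * h9
  rw [h6] at h3
  nlinarith

lemma recip_scale (x : ℝ) (hx : 1 ≤ x) (h : x ≤ Chebyshev.theta (4 * x) - Chebyshev.theta x)
    (L : ℝ) (hL : Real.log (4 * x) ≤ L) :
    1 / (4 * L) ≤ ∑ q ∈ Ioc ⌊x⌋₊ ⌊4 * x⌋₊, if q.Prime then (1 : ℝ) / q else 0 := by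
  have hL0 : 0 < L := lt_of_lt_of_le (Real.log_pos (by linarith)) hL
  have e : Chebyshev.theta (4 * x) - Chebyshev.theta x
      = ∑ q ∈ Ioc ⌊x⌋₊ ⌊4 * x⌋₊, if q.Prime then Real.log q else 0 := by
    unfold Chebyshev.theta
    rw [sum_filter, sum_filter, ← sum_Ioc_consecutive _ (Nat.zero_le _)
      (Nat.floor_mono (show x ≤ 4 * x by linarith))]
    ring
  rw [e] at h
  have h2 : ∑ q ∈ Ioc ⌊x⌋₊ ⌊4 * x⌋₊, (if q.Prime then Real.log q else 0)
      ≤ (4 * x * L) * ∑ q ∈ Ioc ⌊x⌋₊ ⌊4 * x⌋₊, if q.Prime then (1 : ℝ) / q else 0 := by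
    rw [mul_sum]
    refine sum_le_sum fun q hq => ?_
    split_ifs with hp
    · have hq4 : (q : ℝ) ≤ 4 * x := (Nat.le_floor_iff (by linarith)).1 (mem_Ioc.1 hq).2
      have hq0 : (0 : ℝ) < q := by exact_mod_cast hp.pos
      have h3 : Real.log q ≤ L := (Real.log_le_log hq0 hq4).trans hL
      rw [mul_one_div, le_div_iff₀ hq0]
      have := Real.log_natCast_nonneg q
      calc Real.log q * q ≤ L * (4 * x) := by gcongr
        _ = _ := by ring
    · simp
  have h3 := h.trans h2
  rw [div_le_iff₀ (by positivity)]
  have : x * 1 ≤ x * ((∑ q ∈ Ioc ⌊x⌋₊ ⌊4 * x⌋₊, if q.Prime then (1 : ℝ) / q else 0) * (4 * L)) := by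
    linarith
  exact le_of_mul_le_mul_left this (by linarith)

lemma recip_lower : ∃ x0 : ℝ, 1 ≤ x0 ∧ ∀ x ≥ x0, ∀ J : ℕ, ∀ L : ℝ, Real.log (x * 4 ^ J) ≤ L →
    J / (4 * L) ≤ ∑ q ∈ Ioc ⌊x⌋₊ ⌊x * 4 ^ J⌋₊, if q.Prime then (1 : ℝ) / q else 0 := by
  obtain ⟨x0, hx0⟩ := eventually_atTop.1 theta_scale
  refine ⟨max x0 1, le_max_right _ _, fun x hx J L hL => ?_⟩
  have hx1 : 1 ≤ x := (le_max_right _ _).trans hx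
  have hx2 : x0 ≤ x := (le_max_left _ _).trans hx
  have hm : ∀ i j : ℕ, i ≤ j → x * 4 ^ i ≤ x * 4 ^ j := by
    intro i j hij
    have : (4 : ℝ) ^ i ≤ 4 ^ j := pow_le_pow_right₀ (by norm_num) hij
    gcongr
  have hb := sum_blocks (fun i => ⌊x * 4 ^ i⌋₊) (fun i j hij => Nat.floor_mono (hm i j hij))
    (fun q => if q.Prime then (1 : ℝ) / q else 0) J
  simp only [pow_zero, mul_one] at hb
  rw [hb]
  have : ∑ i ∈ range J, 1 / (4 * L) = J / (4 * L) := by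
    rw [sum_const, card_range, nsmul_eq_mul]; ring
  rw [← this]
  refine sum_le_sum fun i hi => ?_
  have hi' : i + 1 ≤ J := by have := mem_range.1 hi; omega
  have hxi : x ≤ x * 4 ^ i := by simpa using hm 0 i (Nat.zero_le i)
  have h5 : x * 4 ^ (i + 1) = 4 * (x * 4 ^ i) := by ring
  rw [h5]
  refine recip_scale _ (by linarith) (hx0 _ (hx2.trans hxi)) L (le_trans ?_ hL)
  rw [← h5]
  exact Real.log_le_log (by positivity) (hm _ _ hi')

end

section
open Finset Filter

lemma floor_half (y : ℝ) (hy : 1 ≤ y) : y / 2 ≤ (⌊y⌋₊ : ℝ) := by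
  have h1 : y < ⌊y⌋₊ + 1 := Nat.lt_floor_add_one y
  have h2 : (1 : ℝ) ≤ ⌊y⌋₊ := by exact_mod_cast Nat.le_floor (by simpa using hy)
  linarith

lemma rp_mul {T : ℝ} (hT : 1 ≤ T) (a b c : ℝ) (h : a + b = c) : T ^ a * T ^ b = T ^ c := by
  rw [← Real.rpow_add (by linarith), h]

noncomputable def Qset (e T : ℝ) : Finset ℕ :=
  (Ioc 0 ⌊T ^ (1 / 2 - 10 * e)⌋₊).filter (fun q => q.Prime ∧ T ^ (1 / 2 - 11 * e) ≤ q)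

lemma log2_bound (N : ℕ) (hN : 1 ≤ N) : ((Nat.log 2 N + 1 : ℕ) : ℝ) ≤ 2 * (1 + Real.log N) := by
  have h1 : 2 ^ Nat.log 2 N ≤ N := Nat.pow_log_le_self 2 (by omega)
  have h2 : ((2 : ℝ) ^ Nat.log 2 N) ≤ N := by exact_mod_cast h1
  have h3 := Real.log_le_log (by positivity) h2
  rw [Real.log_pow] at h3
  have h4 := Real.log_two_gt_d9
  have h5 : (0 : ℝ) ≤ (Nat.log 2 N : ℝ) := Nat.cast_nonneg _
  push_cast
  nlinarith

lemma pow_K (N D : ℕ) (hD : 1 ≤ D) :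
    (N : ℝ) ≤ (1 + 1 / (D : ℝ)) ^ (D * (Nat.log 2 N + 1)) := by
  have hD' : (0 : ℝ) < D := by exact_mod_cast hD
  have h1 : (2 : ℝ) ≤ (1 + 1 / (D : ℝ)) ^ D := by
    have := one_add_mul_le_pow (a := 1 / (D : ℝ)) (by have : (0 : ℝ) < 1 / D := by positivity
                                                      linarith) D
    rw [mul_one_div_cancel hD'.ne'] at this
    linarith
  rw [pow_mul]
  have h2 : (2 : ℝ) ^ (Nat.log 2 N + 1) ≤ ((1 + 1 / (D : ℝ)) ^ D) ^ (Nat.log 2 N + 1) := by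
    gcongr
  refine le_trans ?_ h2
  exact_mod_cast (Nat.lt_pow_succ_log_self (by norm_num) N).le

set_option maxHeartbeats 1000000 in
lemma error_bound (e T : ℝ) (he : 0 < e) (he' : e < 1 / 2000) (hT : 32 ≤ T)
    (hl : 1 + Real.log T ≤ T ^ (e / 10)) :
    ∑ q ∈ Qset e T, |∑ n ∈ Ioc 0 ⌊T⌋₊, afL n * ww q n| ≤ 43 * T ^ (1 - e / 2) := by
  have hT1 : 1 ≤ T := by linarith
  have hT0 : 0 < T := by linarith
  have mono : ∀ a b : ℝ, a ≤ b → T ^ a ≤ T ^ b := fun a b h => Real.rpow_le_rpow_of_exponent_le hT1 h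
  have one : ∀ a : ℝ, 0 ≤ a → 1 ≤ T ^ a := fun a h => Real.one_le_rpow hT1 h
  have pos : ∀ a : ℝ, 0 < T ^ a := fun a => Real.rpow_pos_of_pos hT0 a
  have ml : ∀ a b c : ℝ, a + b = c → T ^ a * T ^ b = T ^ c := rp_mul hT1
  set N := ⌊T⌋₊ with hNdef
  set l := 1 + Real.log T with hldef
  have hNT : (N : ℝ) ≤ T := Nat.floor_le hT0.le
  have hN32 : 32 ≤ N := Nat.le_floor (by exact_mod_cast hT)
  have hlogN : Real.log N ≤ Real.log T := Real.log_le_log (by exact_mod_cast (by omega : 0 < N)) hNT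
  have hlogN0 : 0 ≤ Real.log N := Real.log_natCast_nonneg N
  have hl1 : 1 ≤ l := by have := Real.log_nonneg hT1; linarith
  have hNl : 1 + Real.log N ≤ l := by linarith
  set Q := ⌊T ^ (1 / 2 - 10 * e)⌋₊ with hQdef
  set Q0 := T ^ (1 / 2 - 11 * e) with hQ0def
  set U := ⌊T ^ (1 / 5 : ℝ)⌋₊ with hUdef
  set D := ⌈T ^ (4 * e)⌉₊ with hDdef
  set K := D * (Nat.log 2 N + 1) with hKdef
  have hQT : (Q : ℝ) ≤ T ^ (1 / 2 - 10 * e) := Nat.floor_le (pos _).le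
  have hQ1 : 1 ≤ Q := Nat.le_floor (by simpa using one (1 / 2 - 10 * e) (by linarith))
  have hUT : (U : ℝ) ≤ T ^ (1 / 5 : ℝ) := Nat.floor_le (pos _).le
  have hU1 : 1 ≤ U := Nat.le_floor (by simpa using one (1 / 5) (by norm_num))
  have hUh : T ^ (1 / 5 : ℝ) / 2 ≤ U := floor_half _ (one _ (by norm_num))
  have hT25 : (4 : ℝ) ≤ T ^ (2 / 5 : ℝ) := by
    have h1 : (32 : ℝ) ^ (2 / 5 : ℝ) ≤ T ^ (2 / 5 : ℝ) := Real.rpow_le_rpow (by norm_num) hT (by norm_num)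
    have h2 : (32 : ℝ) ^ (2 / 5 : ℝ) = 4 := by
      rw [show (32 : ℝ) = 2 ^ (5 : ℝ) by norm_num, ← Real.rpow_mul (by norm_num)]; norm_num
    linarith
  have hQ0T : T ^ (2 / 5 : ℝ) < Q0 := Real.rpow_lt_rpow_of_exponent_lt (by linarith) (by linarith)
  have hQ0pos : 0 < Q0 := pos _
  have hUU : U * U < Q0 := by
    refine lt_of_le_of_lt ?_ hQ0T
    rw [← ml (1/5) (1/5) (2/5) (by norm_num)]
    gcongr
  have hD1 : 1 ≤ D := Nat.one_le_iff_ne_zero.2 (by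
    rw [hDdef, Ne, Nat.ceil_eq_zero, not_le]; exact pos _)
  have hDT : (D : ℝ) ≤ 2 * T ^ (4 * e) := by
    have h1 := (Nat.ceil_lt_add_one (pos (4 * e)).le).le
    have h2 := one (4 * e) (by linarith)
    linarith
  have hDge : T ^ (4 * e) ≤ D := Nat.le_ceil _
  have hQs : ∀ q ∈ Qset e T, q.Prime ∧ q ≤ Q ∧ Q0 ≤ q := by
    intro q hq
    have := mem_filter.1 hq
    exact ⟨this.2.1, (mem_Ioc.1 this.1).2, this.2.2⟩
  have hcard : ((Qset e T).card : ℝ) ≤ Q := by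
    have h1 : (Qset e T).card ≤ (Ioc 0 Q).card := card_filter_le _ _
    rw [Nat.card_Ioc, Nat.sub_zero] at h1
    exact_mod_cast h1
  have hN3 : (N : ℝ) < Q0 ^ 3 := by
    refine lt_of_le_of_lt hNT ?_
    rw [hQ0def, ← Real.rpow_natCast, ← Real.rpow_mul hT0.le]
    calc T = T ^ (1 : ℝ) := (Real.rpow_one T).symm
      _ < _ := Real.rpow_lt_rpow_of_exponent_lt (by linarith) (by push_cast; linarith)
  -- type I
  have tI : ∀ q ∈ Qset e T, |∑ n ∈ Ioc 0 N, afL n * ww q n| ≤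
      |∑ n ∈ Ioc 0 N, (afA U * afB U) n * ww q n| + 7 * (U * U) * Real.log N := by
    intro q hq
    have h := hQs q hq
    refine typeI_total q h.1 U U N hU1 hU1 ?_
    have := lt_of_lt_of_le hUU h.2.2
    exact_mod_cast this
  refine (sum_le_sum tI).trans ?_
  rw [sum_add_distrib, sum_const, nsmul_eq_mul]
  -- type II
  set G : ℝ := 1 + 2 * (Q ^ 2 * (2 + Real.log (Q ^ 2))) with hG
  set R : ℝ := 2 + (Qset e T).card / (Q0 - 1) with hRdef
  have hR0 : 0 ≤ R := by
    have : 0 < Q0 - 1 := by linarith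
    positivity
  have hR : ∀ n ∈ Ioc 0 N, (N : ℝ) < (1 + 1 / (D : ℝ)) * n → ∑ q ∈ Qset e T, |ww q n| ≤ R := by
    intro n hn hlt
    refine sum_abs_ww_le (Qset e T) Q0 (by linarith) (fun q hq => ⟨(hQs q hq).1, (hQs q hq).2.2⟩) N n hN3 ?_
      (mem_Ioc.1 hn).2
    have h1 : (1 : ℝ) / D ≤ 1 := by
      rw [div_le_one (by exact_mod_cast hD1)]; exact_mod_cast hD1
    have h2 : (32 : ℝ) ≤ N := by exact_mod_cast hN32
    have h3 : (1 : ℝ) < n := by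
      have : (0 : ℝ) ≤ n := Nat.cast_nonneg n
      nlinarith
    exact_mod_cast h3
  have tII := typeII_total (Qset e T) Q Q0 hQ0pos hQ1 hQs U N K hU1 G hG (1 / (D : ℝ))
    (by have : (0 : ℝ) < D := by exact_mod_cast hD1
        positivity) (pow_K N D hD1) R hR0 hR
  -- numeric bounds
  have b1 : ((Qset e T).card : ℝ) * (7 * (U * U) * Real.log N) ≤ 7 * T ^ (1 - e / 2) := by
    calc _ ≤ T ^ (1 / 2 - 10 * e) * (7 * (T ^ (1 / 5 : ℝ) * T ^ (1 / 5 : ℝ)) * T ^ (e / 10)) := by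
          gcongr
          · exact hcard.trans hQT
          · linarith
      _ = 7 * T ^ (9 / 10 - 99 / 10 * e) := by
          rw [ml (1/5) (1/5) (2/5) (by norm_num), mul_assoc, ml (2/5) (e/10) (2/5 + e/10) rfl,
            mul_left_comm, ml _ _ (9 / 10 - 99 / 10 * e) (by ring)]
      _ ≤ _ := by
          have := mono (9 / 10 - 99 / 10 * e) (1 - e / 2) (by linarith)
          linarith
  have hQ2 : (Q : ℝ) ^ 2 ≤ T ^ (1 - 20 * e) := by
    rw [sq, ← ml (1 / 2 - 10 * e) (1 / 2 - 10 * e) (1 - 20 * e) (by ring)]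
    gcongr
  have hQr : (1 : ℝ) ≤ Q := by exact_mod_cast hQ1
  have hlogQ : Real.log ((Q : ℝ) ^ 2) ≤ Real.log T := by
    refine Real.log_le_log (by positivity) (hQ2.trans ?_)
    calc _ ≤ T ^ (1 : ℝ) := mono _ _ (by linarith)
      _ = T := Real.rpow_one T
  have hlogQ0 : 0 ≤ Real.log ((Q : ℝ) ^ 2) := Real.log_nonneg (by nlinarith)
  have hGb : G ≤ 5 * T ^ (1 - 199 / 10 * e) := by
    have h1 : 2 * ((Q : ℝ) ^ 2 * (2 + Real.log (Q ^ 2))) ≤ 2 * (T ^ (1 - 20 * e) * (2 * T ^ (e / 10))) := by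
      gcongr
      linarith
    have h2 := ml (1 - 20 * e) (e / 10) (1 - 199 / 10 * e) (by ring)
    have h3 := one (1 - 199 / 10 * e) (by linarith)
    have h4 : 2 * (T ^ (1 - 20 * e) * (2 * T ^ (e / 10))) = 4 * T ^ (1 - 199 / 10 * e) := by
      rw [← h2]; ring
    rw [hG]
    linarith
  have hG0 : 0 ≤ G := by rw [hG]; positivity
  have hUpos : (0 : ℝ) < U := by exact_mod_cast hU1
  have c1 : (N : ℝ) ≤ T ^ (2 - 398 / 10 * e) :=
    hNT.trans (by
      calc T = T ^ (1 : ℝ) := (Real.rpow_one T).symm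
        _ ≤ _ := mono _ _ (by linarith))
  have c2 : 2 * G * N / U ≤ 20 * T ^ (2 - 398 / 10 * e) := by
    rw [div_le_iff₀ hUpos]
    calc 2 * G * N ≤ 2 * (5 * T ^ (1 - 199 / 10 * e)) * T ^ (1 : ℝ) := by
          rw [Real.rpow_one]; gcongr
      _ = 10 * T ^ (2 - 199 / 10 * e) := by
          rw [← ml (1 - 199 / 10 * e) 1 (2 - 199 / 10 * e) (by ring)]; ring
      _ ≤ 10 * (T ^ (2 - 398 / 10 * e) * T ^ (1 / 5 : ℝ)) := by
          rw [ml _ _ _ rfl]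
          have := mono (2 - 199 / 10 * e) (2 - 398 / 10 * e + 1 / 5) (by linarith)
          linarith
      _ ≤ 20 * T ^ (2 - 398 / 10 * e) * U := by
          have := mul_le_mul_of_nonneg_left hUh (pos (2 - 398 / 10 * e)).le
          linarith
  have c3 : G ^ 2 ≤ 25 * T ^ (2 - 398 / 10 * e) := by
    rw [← ml (1 - 199 / 10 * e) (1 - 199 / 10 * e) (2 - 398 / 10 * e) (by ring)]
    calc G ^ 2 ≤ (5 * T ^ (1 - 199 / 10 * e)) ^ 2 := by gcongr
      _ = _ := by ring
  have l5 : ∀ k : ℕ, (1 + Real.log N) ^ k ≤ T ^ (k * (e / 10)) := by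
    intro k
    rw [mul_comm, Real.rpow_mul hT0.le, Real.rpow_natCast]
    have := hNl.trans hl
    gcongr
  have c4 : √(N * (1 + Real.log N) ^ 5 * (N + 2 * G * N / U + G ^ 2)) ≤ 7 * T ^ (3 / 2 - 1965 / 100 * e) := by
    rw [Real.sqrt_le_iff]
    refine ⟨by positivity, ?_⟩
    have h5 := l5 5
    calc (N : ℝ) * (1 + Real.log N) ^ 5 * (N + 2 * G * N / U + G ^ 2)
        ≤ T ^ (1 : ℝ) * T ^ ((5 : ℕ) * (e / 10)) * (46 * T ^ (2 - 398 / 10 * e)) := by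
          rw [Real.rpow_one]
          gcongr
          linarith
      _ = 46 * T ^ (3 - 393 / 10 * e) := by
          rw [ml 1 _ _ rfl, mul_left_comm, ml _ _ (3 - 393 / 10 * e) (by push_cast; ring)]
      _ ≤ 49 * T ^ (3 - 393 / 10 * e) := by linarith [pos (3 - 393 / 10 * e)]
      _ = _ := by
          rw [mul_pow, sq (T ^ _), ml _ _ (3 - 393 / 10 * e) (by ring)]; norm_num
  have hKb : (K : ℝ) ≤ 4 * T ^ (41 / 10 * e) := by
    have h1 := log2_bound N (by omega)
    rw [hKdef, Nat.cast_mul]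
    calc (D : ℝ) * ((Nat.log 2 N + 1 : ℕ) : ℝ) ≤ (2 * T ^ (4 * e)) * (2 * T ^ (e / 10)) := by
          gcongr
          linarith
      _ = _ := by rw [← ml (4 * e) (e / 10) (41 / 10 * e) (by ring)]; ring
  have b2 : K / Q0 * √(N * (1 + Real.log N) ^ 5 * (N + 2 * G * N / U + G ^ 2)) ≤ 28 * T ^ (1 - e / 2) := by
    have h1 : 1 / Q0 = T ^ (-(1 / 2 - 11 * e)) := by rw [Real.rpow_neg hT0.le, one_div]
    rw [div_eq_mul_one_div, h1]
    calc _ ≤ 4 * T ^ (41 / 10 * e) * T ^ (-(1 / 2 - 11 * e)) * (7 * T ^ (3 / 2 - 1965 / 100 * e)) := by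
          have := (pos (-(1 / 2 - 11 * e))).le
          gcongr
      _ = 28 * T ^ (1 - 455 / 100 * e) := by
          rw [← ml (41 / 10 * e + -(1 / 2 - 11 * e)) (3 / 2 - 1965 / 100 * e) (1 - 455 / 100 * e) (by ring),
            ← ml (41 / 10 * e) (-(1 / 2 - 11 * e)) _ rfl]; ring
      _ ≤ _ := by
          have := mono (1 - 455 / 100 * e) (1 - e / 2) (by linarith)
          linarith
  have hRb : R ≤ 4 * T ^ e := by
    have h1 : ((Qset e T).card : ℝ) / (Q0 - 1) ≤ 2 * T ^ e := by
      rw [div_le_iff₀ (by linarith)]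
      have h2 := hcard.trans hQT
      have h3 := ml e (1 / 2 - 11 * e) (1 / 2 - 10 * e) (by ring)
      have h4 : Q0 / 2 ≤ Q0 - 1 := by linarith
      have h5 := mul_le_mul_of_nonneg_left h4 (pos e).le
      have h6 : 2 * T ^ e * (Q0 / 2) = T ^ (1 / 2 - 10 * e) := by rw [← h3, hQ0def]; ring
      linarith
    have h2 := one e he.le
    linarith
  have c5 : √((N * (1 / (D : ℝ)) + 1) * (N * (1 + Real.log N) ^ 3)) ≤ 2 * T ^ (1 - 185 / 100 * e) := by
    rw [Real.sqrt_le_iff]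
    refine ⟨by positivity, ?_⟩
    have h3 := l5 3
    have h4 : (N : ℝ) * (1 / (D : ℝ)) + 1 ≤ 2 * T ^ (1 - 4 * e) := by
      have h5 : (N : ℝ) * (1 / (D : ℝ)) ≤ T ^ (1 - 4 * e) := by
        rw [mul_one_div, div_le_iff₀ (by exact_mod_cast hD1)]
        calc (N : ℝ) ≤ T ^ (1 : ℝ) := by rw [Real.rpow_one]; exact hNT
          _ = T ^ (1 - 4 * e) * T ^ (4 * e) := (ml _ _ _ (by ring)).symm
          _ ≤ _ := by gcongr
      have h6 := one (1 - 4 * e) (by linarith)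
      linarith
    calc _ ≤ (2 * T ^ (1 - 4 * e)) * (T ^ (1 : ℝ) * T ^ ((3 : ℕ) * (e / 10))) := by
          rw [Real.rpow_one]; gcongr
      _ = 2 * T ^ (2 - 37 / 10 * e) := by
          rw [ml 1 _ _ rfl, mul_assoc, ml _ _ (2 - 37 / 10 * e) (by push_cast; ring)]
      _ ≤ 4 * T ^ (2 - 37 / 10 * e) := by linarith [pos (2 - 37 / 10 * e)]
      _ = _ := by
          rw [mul_pow, sq (T ^ _), ml _ _ (2 - 37 / 10 * e) (by ring)]; norm_num
  have b3 : R * (1 + Real.log N) * √((N * (1 / (D : ℝ)) + 1) * (N * (1 + Real.log N) ^ 3))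
      ≤ 8 * T ^ (1 - e / 2) := by
    calc _ ≤ (4 * T ^ e) * T ^ (e / 10) * (2 * T ^ (1 - 185 / 100 * e)) := by
          have := hNl.trans hl
          gcongr
      _ = 8 * T ^ (1 - 75 / 100 * e) := by
          rw [← ml (e + e / 10) (1 - 185 / 100 * e) (1 - 75 / 100 * e) (by ring), ← ml e (e / 10) _ rfl]
          ring
      _ ≤ _ := by
          have := mono (1 - 75 / 100 * e) (1 - e / 2) (by linarith)
          linarith
  linarith

end

section
open Finset Filter

lemma recip_Qset (e T x0 : ℝ) (he : 0 < e) (hT : 32 ≤ T)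
    (hx0 : ∀ x ≥ x0, ∀ J : ℕ, ∀ L : ℝ, Real.log (x * 4 ^ J) ≤ L →
      J / (4 * L) ≤ ∑ q ∈ Ioc ⌊x⌋₊ ⌊x * 4 ^ J⌋₊, if q.Prime then (1 : ℝ) / q else 0)
    (hT0 : x0 ≤ T ^ (1 / 2 - 11 * e)) (hTe : 10 ≤ e * Real.log T) :
    e / 4 ≤ ∑ q ∈ Qset e T, (1 : ℝ) / q := by
  have hT1 : 1 ≤ T := by linarith
  have hTp : 0 < T := by linarith
  have hlog : 0 < Real.log T := Real.log_pos (by linarith)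
  have h4 : Real.log 4 = 2 * Real.log 2 := by
    rw [show (4 : ℝ) = 2 ^ 2 by norm_num, Real.log_pow]; norm_num
  have hl2 := Real.log_two_lt_d9
  have hl2' := Real.log_two_gt_d9
  set J := ⌊e * Real.log T / Real.log 4⌋₊ with hJ
  have hJ1 : (J : ℝ) * Real.log 4 ≤ e * Real.log T := by
    rw [← le_div_iff₀ (by linarith)]
    exact Nat.floor_le (div_nonneg (by positivity) (by linarith))
  have hJ2 : e * Real.log T / 2 ≤ J := by
    have h1 : e * Real.log T / Real.log 4 < J + 1 := Nat.lt_floor_add_one _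
    rw [div_lt_iff₀ (by linarith)] at h1
    have : (0 : ℝ) ≤ J := Nat.cast_nonneg J
    nlinarith
  have h4J : (4 : ℝ) ^ J ≤ T ^ e := by
    rw [← Real.log_le_log_iff (by positivity) (by positivity), Real.log_pow, Real.log_rpow hTp]
    exact hJ1
  set Q0 := T ^ (1 / 2 - 11 * e) with hQ0
  have hQ0p : 0 < Q0 := Real.rpow_pos_of_pos hTp _
  have htop : Q0 * 4 ^ J ≤ T ^ (1 / 2 - 10 * e) := by
    rw [← rp_mul hT1 (1 / 2 - 11 * e) e (1 / 2 - 10 * e) (by ring)]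
    gcongr
  have hL : Real.log (Q0 * 4 ^ J) ≤ Real.log T / 2 := by
    refine (Real.log_le_log (by positivity) htop).trans ?_
    rw [Real.log_rpow hTp]
    nlinarith
  have key := hx0 Q0 hT0 J (Real.log T / 2) hL
  have h5 : e / 4 ≤ J / (4 * (Real.log T / 2)) := by
    rw [le_div_iff₀ (by positivity)]
    linarith
  refine h5.trans (key.trans ?_)
  rw [← sum_filter]
  refine sum_le_sum_of_subset_of_nonneg ?_ (fun _ _ _ => by positivity)
  intro q hq
  have h6 := mem_filter.1 hq
  have h7 := mem_Ioc.1 h6.1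
  refine mem_filter.2 ⟨mem_Ioc.2 ⟨h6.2.pos, h7.2.trans (Nat.floor_mono htop)⟩, h6.2, ?_⟩
  exact ((Nat.floor_lt hQ0p.le).1 h7.1).le

lemma final_count (e T x0 : ℝ) (he : 0 < e) (he' : e < 1 / 2000) (hT : 32 ≤ T)
    (hl : 1 + Real.log T ≤ T ^ (e / 10))
    (hx0 : ∀ x ≥ x0, ∀ J : ℕ, ∀ L : ℝ, Real.log (x * 4 ^ J) ≤ L →
      J / (4 * L) ≤ ∑ q ∈ Ioc ⌊x⌋₊ ⌊x * 4 ^ J⌋₊, if q.Prime then (1 : ℝ) / q else 0)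
    (hT0 : x0 ≤ T ^ (1 / 2 - 11 * e)) (hTe : 10 ≤ e * Real.log T)
    (hpsi : 0.68 * T ≤ Chebyshev.psi T) (hbig : 10000 / e ≤ T ^ (e / 2)) :
    e * T / (100 * Real.log T) < (((Ioc 0 ⌊T⌋₊).filter
      (fun n => n.Prime ∧ ∃ q ∈ Qset e T, q ∣ n - 1)).card : ℝ) := by
  have hT1 : 1 ≤ T := by linarith
  have hTp : 0 < T := by linarith
  have hlog : 0 < Real.log T := Real.log_pos (by linarith)
  have hNT : (⌊T⌋₊ : ℝ) ≤ T := Nat.floor_le hTp.le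
  have hN32 : 32 ≤ ⌊T⌋₊ := Nat.le_floor (by exact_mod_cast hT)
  have hlogN : Real.log ⌊T⌋₊ ≤ Real.log T :=
    Real.log_le_log (by exact_mod_cast (by omega : 0 < ⌊T⌋₊)) hNT
  have hlogN0 : 0 ≤ Real.log ⌊T⌋₊ := Real.log_natCast_nonneg _
  set P := (Ioc 0 ⌊T⌋₊).filter (fun n => n.Prime ∧ ∃ q ∈ Qset e T, q ∣ n - 1) with hP
  set Q0 := T ^ (1 / 2 - 11 * e) with hQ0
  have hQ0p : 0 < Q0 := Real.rpow_pos_of_pos hTp _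
  have hQ01 : 1 < Q0 := Real.one_lt_rpow (by linarith) (by linarith)
  have hsmall : 10000 * T ^ (1 - e / 2) ≤ e * T := by
    have h1 := rp_mul hT1 (1 - e / 2) (e / 2) 1 (by ring)
    rw [Real.rpow_one] at h1
    rw [div_le_iff₀ he] at hbig
    have h2 : 0 < T ^ (1 - e / 2) := Real.rpow_pos_of_pos hTp _
    have h3 := mul_le_mul_of_nonneg_left hbig h2.le
    calc _ = T ^ (1 - e / 2) * 10000 := by ring
      _ ≤ _ := h3
      _ = e * (T ^ (1 - e / 2) * T ^ (e / 2)) := by ring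
      _ = e * T := by rw [h1]
  have hQs : ∀ q ∈ Qset e T, q.Prime ∧ Q0 ≤ q := fun q hq => (mem_filter.1 hq).2
  have hN3 : (⌊T⌋₊ : ℝ) < Q0 ^ 3 := by
    refine lt_of_le_of_lt hNT ?_
    rw [hQ0, ← Real.rpow_natCast, ← Real.rpow_mul hTp.le]
    calc T = T ^ (1 : ℝ) := (Real.rpow_one T).symm
      _ < _ := Real.rpow_lt_rpow_of_exponent_lt (by linarith) (by push_cast; linarith)
  have hψ := Chebyshev.psi_eq_psi_coe_floor T
  have hmul : (⌊T⌋₊ : ℝ) / Q0 * Real.log ⌊T⌋₊ ≤ Chebyshev.psi ⌊T⌋₊ / 2 := by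
    rw [← hψ]
    have h1 : (⌊T⌋₊ : ℝ) / Q0 * Real.log ⌊T⌋₊ ≤ T ^ (1 - e / 2) := by
      rw [div_mul_eq_mul_div, div_le_iff₀ hQ0p, hQ0, rp_mul hT1 _ _ _ rfl]
      calc _ ≤ T ^ (1 : ℝ) * T ^ (e / 10) := by
            rw [Real.rpow_one]; gcongr; linarith
        _ = T ^ (1 + e / 10) := rp_mul hT1 _ _ _ rfl
        _ ≤ _ := Real.rpow_le_rpow_of_exponent_le hT1 (by linarith)
    nlinarith
  have hE := error_bound e T he he' hT hl
  have main := main_ineq (Qset e T) Q0 hQ01 hQs ⌊T⌋₊ hN3 (by omega) hmul _ hE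
  have hS := recip_Qset e T x0 he hT hx0 hT0 hTe
  rw [← hψ, ← Chebyshev.theta_eq_theta_coe_floor T] at main
  have hdiff : Chebyshev.psi T - Chebyshev.theta T ≤ 2 * T ^ (1 - e / 2) := by
    have h1 := (abs_le.1 (Chebyshev.abs_psi_sub_theta_le_sqrt_mul_log hT1)).2
    refine h1.trans ?_
    rw [Real.sqrt_eq_rpow]
    calc _ ≤ 2 * T ^ ((1 : ℝ) / 2) * T ^ (e / 10) := by gcongr; linarith
      _ = 2 * T ^ (1 / 2 + e / 10) := by rw [mul_assoc, rp_mul hT1 _ _ _ rfl]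
      _ ≤ _ := by
        have := Real.rpow_le_rpow_of_exponent_le hT1 (show 1 / 2 + e / 10 ≤ 1 - e / 2 by linarith)
        linarith
  have hlow : 0.34 * T * (e / 4) ≤ Chebyshev.psi T / 2 * ∑ q ∈ Qset e T, (1 : ℝ) / q := by
    gcongr
    linarith
  have hup : 2 * Real.log ⌊T⌋₊ * (P.card : ℝ) ≤ 2 * Real.log T * P.card := by gcongr
  rw [div_lt_iff₀ (by positivity)]
  have hpos : 0 < e * T := by positivity
  nlinarith

lemma card_lower (e T : ℝ) (hT : 1 ≤ T) (he : 0 < e) :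
    ((Ioc 0 ⌊T⌋₊).filter (fun n => n.Prime ∧ ∃ q ∈ Qset e T, q ∣ n - 1)).card ≤
      Nat.card {p : ℕ // p.Prime ∧ (p : ℝ) ≤ T ∧ ∃ q : ℕ, q.Prime ∧ q ∣ (p - 1) ∧
        T ^ ((1 : ℝ) / 2 - 20 * e) ≤ (q : ℝ) ∧ (q : ℝ) ≤ T ^ ((1 : ℝ) / 2 - (20 * e) / 2)} := by
  set P := (Ioc 0 ⌊T⌋₊).filter (fun n => n.Prime ∧ ∃ q ∈ Qset e T, q ∣ n - 1) with hP
  have hfin : Finite {p : ℕ // p.Prime ∧ (p : ℝ) ≤ T ∧ ∃ q : ℕ, q.Prime ∧ q ∣ (p - 1) ∧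
        T ^ ((1 : ℝ) / 2 - 20 * e) ≤ (q : ℝ) ∧ (q : ℝ) ≤ T ^ ((1 : ℝ) / 2 - (20 * e) / 2)} := by
    refine Set.Finite.to_subtype (s := {p : ℕ | p.Prime ∧ (p : ℝ) ≤ T ∧ ∃ q : ℕ, q.Prime ∧ q ∣ (p - 1) ∧
        T ^ ((1 : ℝ) / 2 - 20 * e) ≤ (q : ℝ) ∧ (q : ℝ) ≤ T ^ ((1 : ℝ) / 2 - (20 * e) / 2)})
      (Set.Finite.subset (Set.finite_Iic ⌊T⌋₊) ?_)
    intro p hp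
    exact Nat.le_floor hp.2.1
  have hmem : ∀ p ∈ P, p.Prime ∧ (p : ℝ) ≤ T ∧ ∃ q : ℕ, q.Prime ∧ q ∣ (p - 1) ∧
        T ^ ((1 : ℝ) / 2 - 20 * e) ≤ (q : ℝ) ∧ (q : ℝ) ≤ T ^ ((1 : ℝ) / 2 - (20 * e) / 2) := by
    intro p hp
    obtain ⟨h1, h2, q, hq, hd⟩ := mem_filter.1 hp
    obtain ⟨h3, h4, h5⟩ := mem_filter.1 hq
    refine ⟨h2, (Nat.le_floor_iff (by linarith)).1 (mem_Ioc.1 h1).2, q, h4, hd, ?_, ?_⟩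
    · exact (Real.rpow_le_rpow_of_exponent_le hT (by linarith)).trans h5
    · have h6 := (Nat.le_floor_iff (by positivity)).1 (mem_Ioc.1 h3).2
      rw [show (20 * e) / 2 = 10 * e by ring]
      exact h6
  rw [← Nat.card_eq_finsetCard P]
  exact Nat.card_le_card_of_injective (fun x : P => ⟨x.1, hmem x.1 x.2⟩)
    (fun x y hxy => Subtype.ext (by simpa using hxy))

end



theorem primes_with_prime_divisor_in_interval :
    ∃ c : ℝ, 0 < c ∧ ∃ η₀ : ℝ, 0 < η₀ ∧ ∀ η : ℝ, 0 < η → η < η₀ →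
      ∃ T₀ : ℝ, ∀ T : ℝ, T ≥ T₀ →
        (Nat.card {p : ℕ // p.Prime ∧ (p : ℝ) ≤ T ∧
            ∃ q : ℕ, q.Prime ∧ q ∣ (p - 1) ∧
              T ^ ((1 : ℝ) / 2 - η) ≤ (q : ℝ) ∧ (q : ℝ) ≤ T ^ ((1 : ℝ) / 2 - η / 2)} : ℝ) >
          c * η * T / Real.log T := by
  refine ⟨1 / 2000, by norm_num, 1 / 100, by norm_num, fun η hη hη' => ?_⟩
  obtain ⟨e, rfl⟩ : ∃ e : ℝ, η = 20 * e := ⟨η / 20, by ring⟩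
  have he : 0 < e := by linarith
  have he' : e < 1 / 2000 := by linarith
  obtain ⟨x0, _, hx0⟩ := recip_lower
  refine Filter.eventually_atTop.1 ?_
  filter_upwards [Filter.eventually_ge_atTop (32 : ℝ), ev_log_le (e / 10) (1 / 2) (by positivity) (by norm_num),
    (tendsto_rpow_atTop (show 0 < e / 10 by positivity)).eventually_ge_atTop 2,
    (tendsto_rpow_atTop (show 0 < 1 / 2 - 11 * e by linarith)).eventually_ge_atTop x0,
    Real.tendsto_log_atTop.eventually_ge_atTop (10 / e), psi_lower,
    (tendsto_rpow_atTop (show 0 < e / 2 by positivity)).eventually_ge_atTop (10000 / e)]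
    with T h1 h2 h3 h4 h5 h6 h7
  rw [div_le_iff₀ he] at h5
  have hc := final_count e T x0 he he' h1 (by linarith) hx0 h4 (by linarith) h6 h7
  have hk : (((Finset.Ioc 0 ⌊T⌋₊).filter (fun n => n.Prime ∧ ∃ q ∈ Qset e T, q ∣ n - 1)).card : ℝ) ≤ _ :=
    Nat.cast_le.2 (card_lower e T (by linarith) he)
  refine lt_of_le_of_lt (le_of_eq ?_) (lt_of_lt_of_le hc hk)
  rw [mul_comm (100 : ℝ), ← div_div]
  ring
end

section
/- There is an absolute constant c > 0 such that for every sufficiently large positive integer r and every z ∈ ℂ with z ≠ 0, there exists a subset E ⊆ {1, 2, …, r} with |E| > c·log r such that 1 + s·z ≠ 0 for all s ∈ E and the complex numbers {1 + s·z : s ∈ E} are multiplicatively independent. -/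
section Aux
open Height NumberField Real

universe u in
/-- Logarithmic embedding into an `L¹` space. -/
lemma exists_log_embedding {K : Type u} [Field K] [NumberField K] (T : Finset K)
    (hT : ∀ x ∈ T, x ≠ 0) :
    ∃ (ι : Type u) (_ : Fintype ι) (L : K → PiLp 1 (fun _ : ι => ℝ)),
      (∀ x y, x ≠ 0 → y ≠ 0 → L (x * y) = L x + L y) ∧
      (∀ x ∈ T, ‖L x‖ = 2 * logHeight₁ x) := by
  classical
  have hfin : ∀ x : K, x ≠ 0 → (Function.support fun v : FinitePlace K => log (v x)).Finite := by
    intro x hx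
    refine Set.Finite.subset (FinitePlace.hasFiniteMulSupport hx) ?_
    intro v hv h
    apply hv
    simp only at h ⊢
    rw [h, log_one]
  let S : Finset (FinitePlace K) :=
    T.attach.biUnion fun x => (hfin x.1 (hT x.1 x.2)).toFinset
  refine ⟨InfinitePlace K ⊕ S, inferInstance, fun x => WithLp.toLp 1
    (Sum.elim (fun v => (v.mult : ℝ) * log (v x)) (fun v => log (v.1 x))), ?_, ?_⟩
  · intro x y hx hy
    ext i
    rcases i with v | v
    · simp only [Sum.elim_inl, PiLp.add_apply, map_mul]
      rw [log_mul (by simpa using hx) (by simpa using hy)]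
      ring
    · simp only [Sum.elim_inr, PiLp.add_apply, map_mul]
      rw [log_mul (by simpa using hx) (by simpa using hy)]
  · intro x hx
    have key : ∀ t : ℝ, log⁺ t + log⁺ t⁻¹ = |log t| := by
      intro t
      rw [posLog_apply, posLog_apply, log_inv]
      rcases le_total 0 (log t) with h | h
      · simp [h, abs_of_nonneg h]
      · simp [h, abs_of_nonpos h]
    have h2 : 2 * logHeight₁ x = logHeight₁ x + logHeight₁ x⁻¹ := by
      rw [logHeight₁_inv]; ring
    have hsub : ∀ f : ℝ → ℝ, (∀ t, log t = 0 → f t = 0) →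
        ∑ᶠ v : FinitePlace K, f (v x) = ∑ v ∈ S, f (v x) := by
      intro f hf
      apply finsum_eq_finsetSum_of_support_subset
      intro v hv
      have : log (v x) ≠ 0 := fun h => hv (hf _ h)
      simp only [S, Finset.coe_biUnion, Set.mem_iUnion]
      exact ⟨⟨x, hx⟩, by simp, by simpa using this⟩
    have e1 : ∑ᶠ v : FinitePlace K, log⁺ (v x) = ∑ v ∈ S, log⁺ (v x) :=
      hsub _ fun t ht => by simp [posLog_apply, ht]
    have e2 : ∑ᶠ v : FinitePlace K, log⁺ (v x⁻¹) = ∑ v ∈ S, log⁺ (v x)⁻¹ := by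
      rw [← hsub (fun t => log⁺ t⁻¹) fun t ht => by simp [posLog_apply, ht]]
      simp only [map_inv₀]
    rw [h2, NumberField.logHeight₁_eq, NumberField.logHeight₁_eq, e1, e2, PiLp.norm_eq_of_L1,
      Fintype.sum_sum_type]
    simp only [Sum.elim_inl, Sum.elim_inr, Real.norm_eq_abs, abs_mul, Nat.abs_cast, ← key, mul_add,
      Finset.sum_add_distrib, map_inv₀]
    rw [Finset.sum_coe_sort S (fun v => log⁺ (v x)), Finset.sum_coe_sort S (fun v => log⁺ (v x)⁻¹)]
    ring

lemma halving {E : Type*} [NormedAddCommGroup E] [NormedSpace ℝ E] [FiniteDimensional ℝ E]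
    (A : Finset ℕ) (hA : A.Nonempty) (f : ℕ → E) (c : E) (R : ℝ) (hR : 0 < R)
    (h : ∀ a ∈ A, ‖f a - c‖ ≤ R) :
    ∃ a₀ ∈ A, ∃ A' ⊆ A, A'.Nonempty ∧ (∀ a ∈ A', ‖f a - f a₀‖ ≤ R / 2) ∧
      A.card ≤ 5 ^ (Module.finrank ℝ E) * A'.card := by
  classical
  let P : Finset (Finset ℕ) := A.powerset.filter fun S =>
    ∀ a ∈ S, ∀ b ∈ S, a ≠ b → R / 2 < ‖f a - f b‖
  have hP : P.Nonempty := ⟨∅, by simp [P]⟩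
  obtain ⟨S, hSP, hSmax⟩ := P.exists_max_image Finset.card hP
  obtain ⟨hSA, hS⟩ : S ⊆ A ∧ ∀ a ∈ S, ∀ b ∈ S, a ≠ b → R / 2 < ‖f a - f b‖ := by
    simpa [P] using hSP
  have hinj : Set.InjOn (fun a => (2 / R) • (f a - c)) (S : Set ℕ) := by
    intro a ha b hb hab
    by_contra hne
    have h1 := hS a ha b hb hne
    have : f a - c = f b - c := smul_right_injective E (by positivity : (2 / R) ≠ 0) hab
    have h3 : f a - f b = 0 := by
      have : f a = f b := by simpa using this
      simp [this]
    rw [h3, norm_zero] at h1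
    linarith
  have hcard : S.card ≤ 5 ^ Module.finrank ℝ E := by
    rw [← Finset.card_image_of_injOn hinj]
    apply Besicovitch.card_le_of_separated
    · intro x hx
      obtain ⟨a, ha, rfl⟩ := Finset.mem_image.1 hx
      rw [norm_smul, Real.norm_eq_abs, abs_of_pos (by positivity)]
      calc 2 / R * ‖f a - c‖ ≤ 2 / R * R := by gcongr; exact h a (hSA ha)
        _ = 2 := by field_simp
    · intro x hx y hy hxy
      obtain ⟨a, ha, rfl⟩ := Finset.mem_image.1 hx
      obtain ⟨b, hb, rfl⟩ := Finset.mem_image.1 hy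
      have hab : a ≠ b := by rintro rfl; exact hxy rfl
      rw [← smul_sub, norm_smul, Real.norm_eq_abs, abs_of_pos (by positivity), sub_sub_sub_cancel_right]
      calc (1:ℝ) = 2 / R * (R / 2) := by field_simp
        _ ≤ 2 / R * ‖f a - f b‖ := by gcongr; exact (hS a ha b hb hab).le
  let N : ℕ → Finset ℕ := fun s => A.filter fun a => ‖f a - f s‖ ≤ R / 2
  have hcov : A ⊆ S.biUnion N := by
    intro a ha
    by_contra hcon
    simp only [Finset.mem_biUnion, N, Finset.mem_filter, not_exists, not_and, not_le] at hcon
    have hfar : ∀ s ∈ S, R / 2 < ‖f a - f s‖ := fun s hs => hcon s hs ha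
    have haS : a ∉ S := by
      intro haS
      have := hfar a haS
      simp at this
      linarith
    have : insert a S ∈ P := by
      simp only [P, Finset.mem_filter, Finset.mem_powerset]
      refine ⟨Finset.insert_subset ha hSA, ?_⟩
      intro x hx y hy hxy
      rcases Finset.mem_insert.1 hx with rfl | hx' <;> rcases Finset.mem_insert.1 hy with rfl | hy'
      · exact absurd rfl hxy
      · exact hfar y hy'
      · rw [norm_sub_rev]; exact hfar x hx'
      · exact hS x hx' y hy' hxy
    have := hSmax _ this
    rw [Finset.card_insert_of_notMem haS] at this
    omega
  have hSne : S.Nonempty := by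
    obtain ⟨a, ha⟩ := hA
    obtain ⟨s, hs, _⟩ := Finset.mem_biUnion.1 (hcov ha)
    exact ⟨s, hs⟩
  obtain ⟨s, hs, hsmax⟩ := S.exists_max_image (fun s => (N s).card) hSne
  refine ⟨s, hSA hs, N s, Finset.filter_subset _ _, ⟨s, ?_⟩, ?_, ?_⟩
  · simp only [N, Finset.mem_filter, sub_self, norm_zero]
    exact ⟨hSA hs, by positivity⟩
  · intro a ha
    exact (Finset.mem_filter.1 ha).2
  · calc A.card ≤ (S.biUnion N).card := Finset.card_le_card hcov
      _ ≤ S.card * (N s).card := Finset.card_biUnion_le_card_mul _ _ _ hsmax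
      _ ≤ _ := Nat.mul_le_mul_right _ hcard

lemma halving_iter {E : Type*} [NormedAddCommGroup E] [NormedSpace ℝ E] [FiniteDimensional ℝ E]
    (A : Finset ℕ) (hA : A.Nonempty) (f : ℕ → E) (R : ℝ) (hR : 0 < R)
    (h : ∀ a ∈ A, ‖f a‖ ≤ R) (j : ℕ) :
    ∃ a₀ ∈ A, ∃ A' ⊆ A, A'.Nonempty ∧ (∀ a ∈ A', ‖f a - f a₀‖ ≤ R / 2 ^ (j + 1)) ∧
      A.card ≤ (5 ^ (Module.finrank ℝ E)) ^ (j + 1) * A'.card := by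
  induction j with
  | zero => simpa using halving A hA f 0 R hR (by simpa using h)
  | succ j ih =>
    obtain ⟨a₀, ha₀, A', hA', hne, hd, hc⟩ := ih
    obtain ⟨a₁, ha₁, A'', hA'', hne', hd', hc'⟩ :=
      halving A' hne f (f a₀) _ (by positivity) hd
    refine ⟨a₁, hA' ha₁, A'', hA''.trans hA', hne', ?_, ?_⟩
    · intro a ha
      refine (hd' a ha).trans (le_of_eq ?_)
      rw [pow_succ 2 (j+1)]; field_simp
    · calc A.card ≤ _ := hc
        _ ≤ (5 ^ (Module.finrank ℝ E)) ^ (j + 1) * (5 ^ (Module.finrank ℝ E) * A''.card) := by gcongr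
        _ = _ := by ring

lemma natCast_height_le {K : Type*} [Field K] [NumberField K] (n : ℕ) :
    logHeight₁ (n : K) ≤ totalWeight K * log n := by
  have := logHeight₁_sum_le (K := K) (Finset.range n) (fun _ => 1)
  simpa using this

lemma le_height_rat {K : Type*} [Field K] [NumberField K] (q : ℚ) :
    totalWeight K * log (max (|q.num| : ℝ) q.den) ≤ logHeight₁ (q : K) := by
  have hden : (q.den : K) ≠ 0 := by exact_mod_cast q.den_nz
  have hq : (q : K) = (q.num : K) / (q.den : K) := by
    rw [← Rat.cast_def]
  have hpos : (0:ℝ) < max (|q.num| : ℝ) q.den :=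
    lt_of_lt_of_le (by exact_mod_cast q.den_pos) (le_max_right _ _)
  rw [logHeight₁_eq_log_mulHeight₁, ← log_pow]
  apply log_le_log (by positivity)
  rw [hq, mulHeight₁_div_eq_mulHeight, NumberField.mulHeight_eq (by
    intro h; exact hden (by simpa using congrFun h 1))]
  have h1 : (max (|q.num| : ℝ) q.den) ^ totalWeight K ≤
      ∏ v : InfinitePlace K, (⨆ i, v (![(q.num : K), (q.den : K)] i)) ^ v.mult := by
    rw [totalWeight_eq_sum_mult, ← Finset.prod_pow_eq_pow_sum]
    apply Finset.prod_le_prod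
    · intros; positivity
    · intro v _
      gcongr
      apply max_le
      · refine le_trans (le_of_eq ?_) (le_ciSup (Set.finite_range _).bddAbove 0)
        simp [Int.norm_eq_abs]
      · refine le_trans (le_of_eq ?_) (le_ciSup (Set.finite_range _).bddAbove 1)
        simp
  have h2 : (1:ℝ) ≤ ∏ᶠ v : FinitePlace K, (⨆ i, v (![(q.num : K), (q.den : K)] i)) := by
    apply one_le_finprod
    intro v
    have hv : IsNonarchimedean (v : K → ℝ) := FinitePlace.add_le v
    obtain ⟨a, b, hab⟩ : IsCoprime q.num (q.den : ℤ) := by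
      rw [Int.isCoprime_iff_gcd_eq_one]; simpa [Int.gcd] using q.reduced
    have hab' : (a : K) * q.num + b * q.den = 1 := by exact_mod_cast congrArg (Int.cast : ℤ → K) hab
    have hint : ∀ n : ℤ, v (n : K) ≤ 1 := by
      intro n
      exact IsNonarchimedean.apply_intCast_le_one hv
    have h3 := hv ((a : K) * q.num) (b * q.den)
    rw [hab', map_one, map_mul, map_mul] at h3
    rcases le_max_iff.1 h3 with h | h
    · refine le_trans (h.trans ?_) (le_ciSup (Set.finite_range _).bddAbove 0)
      exact mul_le_of_le_one_left (by positivity) (hint a)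
    · refine le_trans (h.trans ?_) (le_ciSup (Set.finite_range _).bddAbove 1)
      exact mul_le_of_le_one_left (by positivity) (hint b)
  calc _ ≤ _ := h1
    _ ≤ _ := le_mul_of_one_le_right (Finset.prod_nonneg fun v _ => pow_nonneg (Real.iSup_nonneg fun i => by positivity) _) h2

lemma height_ratio {K : Type*} [Field K] [NumberField K] (z : K) (r s t : ℕ)
    (hs : s ∈ Finset.Icc 1 r) (ht : t ∈ Finset.Icc 1 r) (hst : s ≠ t)
    (ht0 : 1 + (t : K) * z ≠ 0) :
    logHeight₁ z ≤ 2 * logHeight₁ ((1 + (s : K) * z) / (1 + (t : K) * z)) +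
      totalWeight K * (2 * log 2 + 2 * log r) := by
  set w := (1 + (s : K) * z) / (1 + (t : K) * z) with hw
  rw [Finset.mem_Icc] at hs ht
  have hst' : (s : K) - t ≠ 0 := by
    rw [sub_ne_zero]; exact_mod_cast hst
  have ht1 : 1 + z * (t : K) ≠ 0 := by rwa [mul_comm z]
  have e1 : w - 1 = (s - t) * z / (1 + t * z) := by rw [hw]; field_simp; ring
  have e2 : s - t * w = (s - t) / (1 + t * z) := by rw [hw]; field_simp; ring
  have hz : z = (w - 1) * (s - t * w)⁻¹ := by
    rw [e1, e2]; field_simp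
  have hh : ∀ n : ℕ, 1 ≤ n ∧ n ≤ r → logHeight₁ (n : K) ≤ totalWeight K * log r := by
    intro n hn
    refine (natCast_height_le n).trans ?_
    have : (0:ℝ) < n := by exact_mod_cast hn.1
    gcongr
    exact hn.2
  have h1 : logHeight₁ z ≤ logHeight₁ (w - 1) + logHeight₁ (s - t * w) := by
    conv_lhs => rw [hz]
    refine (logHeight₁_mul_le _ _).trans ?_
    rw [logHeight₁_inv]
  have h2 := logHeight₁_sub_le w 1
  have h3 := logHeight₁_sub_le (s : K) (t * w)
  have h4 := logHeight₁_mul_le (t : K) w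
  have h5 := hh s hs
  have h6 := hh t ht
  rw [logHeight₁_one] at h2
  linarith

lemma fiber_card {K : Type*} [Field K] [NumberField K] (z : K) (hz : z ≠ 0) (r t : ℕ) (X : ℝ)
    (hX : 16 ≤ X) (hXr : log r = 4 * log X)
    (ht0 : 1 + (t : K) * z ≠ 0) (A : Finset ℕ)
    (hA : ∀ s ∈ A, logHeight₁ ((1 + (s : K) * z) / (1 + (t : K) * z)) ≤
      totalWeight K * (log r / 16)) :
    (A.card : ℝ) ≤ 4 * X ^ 2 := by
  classical
  have hd : (0:ℝ) < totalWeight K := by exact_mod_cast NumberField.totalWeight_pos (K := K)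
  by_cases hex : ∃ m ∈ A, m ≠ t
  swap
  · push Not at hex
    have : A ⊆ {t} := fun s hs => by simpa using hex s hs
    have : A.card ≤ 1 := by simpa using Finset.card_le_card this
    have : (A.card : ℝ) ≤ 1 := by exact_mod_cast this
    nlinarith
  obtain ⟨m, hmA, hmt⟩ := hex
  have hlog2 : 4 * log 2 ≤ log X := by
    rw [show 4 * log 2 = log ((2:ℝ) ^ 4) by rw [log_pow]; norm_num]
    exact log_le_log (by norm_num) (by linarith)
  let q : ℕ → ℚ := fun s => ((s : ℚ) - t) / ((m : ℚ) - t)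
  have hmt' : (m : ℚ) - t ≠ 0 := by rw [sub_ne_zero]; exact_mod_cast hmt
  have hmtK : (m : K) - t ≠ 0 := by rw [sub_ne_zero]; exact_mod_cast hmt
  let N := ⌊X⌋₊
  have hNX : (N : ℝ) ≤ X := Nat.floor_le (by linarith)
  have hq : ∀ s ∈ A, max (|(q s).num| : ℝ) (q s).den ≤ X := by
    intro s hs
    have hpos : (0:ℝ) < max (|(q s).num| : ℝ) (q s).den :=
      lt_of_lt_of_le (by exact_mod_cast (q s).den_pos) (le_max_right _ _)
    rw [← log_le_log_iff hpos (by linarith)]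
    have h1 := le_height_rat (K := K) (q s)
    have e : ((q s : ℚ) : K) = ((1 + (s : K) * z) / (1 + (t : K) * z) - 1) *
        ((1 + (m : K) * z) / (1 + (t : K) * z) - 1)⁻¹ := by
      have ht1 : 1 + z * (t : K) ≠ 0 := by rwa [mul_comm z]
      have e1 : ∀ s : ℕ, (1 + (s : K) * z) / (1 + (t : K) * z) - 1 = (s - t) * z / (1 + t * z) := by
        intro s; field_simp; ring
      rw [e1, e1]
      simp only [q]
      push_cast
      field_simp
    have h2 := logHeight₁_mul_le ((1 + (s : K) * z) / (1 + (t : K) * z) - 1)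
      ((1 + (m : K) * z) / (1 + (t : K) * z) - 1)⁻¹
    rw [← e, logHeight₁_inv] at h2
    have h3 := logHeight₁_sub_le ((1 + (s : K) * z) / (1 + (t : K) * z)) 1
    have h4 := logHeight₁_sub_le ((1 + (m : K) * z) / (1 + (t : K) * z)) 1
    rw [logHeight₁_one] at h3 h4
    have h5 := hA s hs
    have h6 := hA m hmA
    have h7 : totalWeight K * log (max (|(q s).num| : ℝ) (q s).den) ≤
        totalWeight K * (2 * log 2 + 2 * (log r / 16)) := by linarith
    have h8 := le_of_mul_le_mul_left h7 hd
    rw [hXr] at h8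
    linarith
  have hcard : A.card ≤ (Finset.Icc (-(N : ℤ)) N ×ˢ Finset.Icc 1 N).card := by
    apply Finset.card_le_card_of_injOn (fun s => ((q s).num, (q s).den))
    · intro s hs
      have h := hq s hs
      have h1 : ((q s).num.natAbs : ℝ) ≤ X := by
        refine le_trans (le_of_eq ?_) ((le_max_left _ _).trans h)
        rw [Nat.cast_natAbs]; simp
      have h2 : ((q s).den : ℝ) ≤ X := (le_max_right _ _).trans h
      have h1' : (q s).num.natAbs ≤ N := Nat.le_floor h1
      have h2' : (q s).den ≤ N := Nat.le_floor h2
      have h3 := (q s).den_pos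
      simp only [Finset.coe_product, Set.mem_prod, Finset.coe_Icc, Set.mem_Icc]
      omega
    · intro s hs s' hs' h
      have h' : q s = q s' := Rat.ext (congrArg Prod.fst h) (congrArg Prod.snd h)
      simp only [q] at h'
      rw [div_left_inj' hmt'] at h'
      have : (s : ℚ) = s' := by linarith
      exact_mod_cast this
  have hcard' : A.card ≤ (2 * N + 1) * N := by
    refine hcard.trans (le_of_eq ?_)
    rw [Finset.card_product, Int.card_Icc, Nat.card_Icc]
    congr 1
    omega
  have : (A.card : ℝ) ≤ (2 * N + 1) * N := by exact_mod_cast hcard'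
  have hN0 : (0:ℝ) ≤ N := by positivity
  nlinarith

/-- multiplicative independence of `1 + s z`, `s ∈ E`. -/
def MultInd {K : Type*} [Field K] (z : K) (E : Finset ℕ) : Prop :=
  (∀ s ∈ E, 1 + (s : K) * z ≠ 0) ∧
    ∀ n : ℕ → ℤ, (∏ s ∈ E, (1 + (s : K) * z) ^ (n s)) = 1 → ∀ s ∈ E, n s = 0

lemma numberField_case {K : Type*} [Field K] [NumberField K] (z : K) (hz : z ≠ 0) (r : ℕ)
    (hr : 2 ^ 16 ≤ r) : ∃ E : Finset ℕ, E ⊆ Finset.Icc 1 r ∧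
      (E.card : ℝ) > 1 / 200 * log r ∧ MultInd z E := by
  classical
  have hd : (0:ℝ) < totalWeight K := by exact_mod_cast NumberField.totalWeight_pos (K := K)
  have hrR : (2:ℝ) ^ 16 ≤ r := by exact_mod_cast hr
  have hr0 : (0:ℝ) < r := by linarith [show (0:ℝ) < 2 ^ 16 by norm_num]
  have hl2 : 16 * log 2 ≤ log r := by
    rw [show 16 * log 2 = log ((2:ℝ) ^ 16) by rw [log_pow]; norm_num]
    exact log_le_log (by norm_num) hrR
  have hlog2 : 0 < log 2 := log_pos (by norm_num)
  have hl0 : 0 < log r := by linarith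
  -- the fourth root
  obtain ⟨X, hX0, hX⟩ : ∃ X : ℝ, 0 < X ∧ X ^ 4 = r :=
    ⟨(r : ℝ) ^ ((1:ℝ) / 4), by positivity, by
      rw [← Real.rpow_natCast, ← Real.rpow_mul hr0.le]; norm_num⟩
  have hX16 : 16 ≤ X := by
    by_contra h
    push Not at h
    have : X ^ 4 < 16 ^ 4 := by gcongr
    rw [hX] at this
    norm_num at this hrR
    linarith
  have hXr : log r = 4 * log X := by
    rw [← hX, log_pow]; norm_num
  let A : Finset ℕ := (Finset.Icc 1 r).filter fun s => 1 + (s : K) * z ≠ 0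
  have hAmem : ∀ s ∈ A, s ∈ Finset.Icc 1 r ∧ 1 + (s : K) * z ≠ 0 := fun s hs =>
    Finset.mem_filter.1 hs
  have hAcard : r ≤ A.card + 1 := by
    have h1 : ((Finset.Icc 1 r).filter fun s : ℕ => ¬ (1 + (s : K) * z ≠ 0)).card ≤ 1 := by
      rw [Finset.card_le_one]
      intro a ha b hb
      have ha' := (Finset.mem_filter.1 ha).2
      have hb' := (Finset.mem_filter.1 hb).2
      push Not at ha' hb'
      have : ((a : K) - b) * z = 0 := by linear_combination ha' - hb'
      rcases mul_eq_zero.1 this with h | h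
      · exact_mod_cast sub_eq_zero.1 h
      · exact absurd h hz
    have h2 := Finset.card_filter_add_card_filter_not (s := Finset.Icc 1 r)
      (fun s : ℕ => 1 + (s : K) * z ≠ 0)
    rw [Nat.card_Icc] at h2
    change A.card + _ = _ at h2
    omega
  have hAne : A.Nonempty := by
    rw [← Finset.card_pos]
    have : (2:ℕ) ^ 16 = 65536 := by norm_num
    omega
  -- maximal independent subset
  have hPne : (A.powerset.filter fun E => MultInd z E).Nonempty :=
    ⟨∅, by
      rw [Finset.mem_filter]
      exact ⟨by simp, by simp [MultInd]⟩⟩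
  obtain ⟨E, hEP, hEmax⟩ := (A.powerset.filter fun E => MultInd z E).exists_max_image
    Finset.card hPne
  rw [Finset.mem_filter, Finset.mem_powerset] at hEP
  obtain ⟨hEA, hE⟩ := hEP
  refine ⟨E, hEA.trans (Finset.filter_subset _ _), ?_, hE⟩
  by_contra hk
  push Not at hk
  -- embedding
  let T : Finset K := A.image (fun s : ℕ => 1 + (s : K) * z) ∪
    (A ×ˢ A).image (fun p : ℕ × ℕ => (1 + (p.1 : K) * z) / (1 + (p.2 : K) * z))
  have hT : ∀ x ∈ T, x ≠ 0 := by
    intro x hx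
    rcases Finset.mem_union.1 hx with h | h
    · obtain ⟨s, hs, rfl⟩ := Finset.mem_image.1 h
      exact (hAmem s hs).2
    · obtain ⟨p, hp, rfl⟩ := Finset.mem_image.1 h
      rw [Finset.mem_product] at hp
      exact div_ne_zero (hAmem _ hp.1).2 (hAmem _ hp.2).2
  obtain ⟨ι, _, L, hLmul, hLnorm⟩ := exists_log_embedding T hT
  have hL1 : L 1 = 0 := by
    have := hLmul 1 1 one_ne_zero one_ne_zero
    rw [mul_one] at this
    simpa using this
  have hLpow : ∀ x, x ≠ 0 → ∀ n : ℕ, L (x ^ n) = (n : ℝ) • L x := by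
    intro x hx n
    induction n with
    | zero => simp [hL1]
    | succ n ih => rw [pow_succ, hLmul _ _ (pow_ne_zero _ hx) hx, ih]; push_cast; rw [add_smul, one_smul]
  have hLinv : ∀ x, x ≠ 0 → L x⁻¹ = - L x := by
    intro x hx
    have := hLmul x x⁻¹ hx (inv_ne_zero hx)
    rw [mul_inv_cancel₀ hx, hL1] at this
    exact (neg_eq_of_add_eq_zero_right this.symm).symm
  have hLzpow : ∀ x, x ≠ 0 → ∀ n : ℤ, L (x ^ n) = (n : ℝ) • L x := by
    intro x hx n
    obtain ⟨m, rfl | rfl⟩ := n.eq_nat_or_neg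
    · rw [zpow_natCast, hLpow x hx]; simp
    · rw [zpow_neg, zpow_natCast, hLinv _ (pow_ne_zero _ hx), hLpow x hx]; simp
  let g : ℕ → K := fun s => 1 + (s : K) * z
  have hLprod : ∀ (F : Finset ℕ), F ⊆ A → ∀ n : ℕ → ℤ,
      L (∏ s ∈ F, g s ^ n s) = ∑ s ∈ F, (n s : ℝ) • L (g s) := by
    intro F
    induction F using Finset.induction_on with
    | empty => intro _ n; simpa using hL1
    | insert a F ha ih =>
      intro hF n
      have hg : ∀ s ∈ insert a F, g s ≠ 0 := fun s hs => (hAmem s (hF hs)).2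
      rw [Finset.prod_insert ha, Finset.sum_insert ha, hLmul, hLzpow _ (hg a (by simp)),
        ih ((Finset.subset_insert _ _).trans hF)]
      · exact zpow_ne_zero _ (hg a (by simp))
      · exact Finset.prod_ne_zero_iff.2 fun s hs => zpow_ne_zero _ (hg s (by simp [hs]))
  let V : Submodule ℝ (PiLp 1 (fun _ : ι => ℝ)) :=
    Submodule.span ℝ ((E.image fun s => L (g s) : Finset _) : Set (PiLp 1 (fun _ : ι => ℝ)))
  have hEV : ∀ s ∈ E, L (g s) ∈ V := fun s hs =>
    Submodule.subset_span (Finset.mem_coe.2 (Finset.mem_image_of_mem _ hs))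
  have hVdim : Module.finrank ℝ V ≤ E.card :=
    (finrank_span_finset_le_card _).trans Finset.card_image_le
  have hAV : ∀ s ∈ A, L (g s) ∈ V := by
    intro s hs
    by_cases hsE : s ∈ E
    · exact hEV s hsE
    have hnot : ¬ MultInd z (insert s E) := by
      intro h
      have := hEmax (insert s E) (by
        rw [Finset.mem_filter, Finset.mem_powerset]
        exact ⟨Finset.insert_subset hs hEA, h⟩)
      rw [Finset.card_insert_of_notMem hsE] at this
      omega
    have hsub : insert s E ⊆ A := Finset.insert_subset hs hEA
    unfold MultInd at hnot
    rw [not_and] at hnot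
    have hnot := hnot fun x hx => (hAmem x (hsub hx)).2
    push Not at hnot
    obtain ⟨n, hn1, x, hx, hnx⟩ := hnot
    have hns : n s ≠ 0 := by
      intro h0
      rw [Finset.prod_insert hsE, h0, zpow_zero, one_mul] at hn1
      have := hE.2 n hn1
      rcases Finset.mem_insert.1 hx with rfl | hx'
      · exact hnx h0
      · exact hnx (this x hx')
    have h := hLprod _ hsub n
    rw [show ∏ s ∈ insert s E, g s ^ n s = 1 from hn1, hL1, Finset.sum_insert hsE] at h
    have h2 : (n s : ℝ) • L (g s) = - ∑ e ∈ E, (n e : ℝ) • L (g e) :=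
      eq_neg_of_add_eq_zero_left h.symm
    have h3 : (n s : ℝ) • L (g s) ∈ V := by
      rw [h2]
      exact V.neg_mem (V.sum_mem fun e he => V.smul_mem _ (hEV e he))
    exact (V.smul_mem_iff (by exact_mod_cast hns)).1 h3
  let f : ℕ → V := fun s => if h : s ∈ A then ⟨L (g s), hAV s h⟩ else 0
  have hf1 : ∀ s ∈ A, ‖f s‖ = 2 * logHeight₁ (g s) := by
    intro s hs
    simp only [f, hs, dif_pos, Submodule.coe_norm]
    exact hLnorm _ (Finset.mem_union_left _ (Finset.mem_image_of_mem _ hs))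
  have hf2 : ∀ s ∈ A, ∀ t ∈ A, ‖f s - f t‖ = 2 * logHeight₁ (g s / g t) := by
    intro s hs t ht
    simp only [f, hs, ht, dif_pos, Submodule.coe_norm, Submodule.coe_sub]
    have h1 : L (g s / g t) = L (g s) - L (g t) := by
      rw [div_eq_mul_inv, hLmul _ _ (hAmem s hs).2 (inv_ne_zero (hAmem t ht).2),
        hLinv _ (hAmem t ht).2, sub_eq_add_neg]
    rw [← h1]
    exact hLnorm _ (Finset.mem_union_right _
      (Finset.mem_image.2 ⟨(s, t), Finset.mem_product.2 ⟨hs, ht⟩, rfl⟩))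
  have hgle : ∀ s ∈ A, logHeight₁ (g s) ≤ logHeight₁ z + 2 * (totalWeight K * log r) := by
    intro s hs
    have hs' := Finset.mem_Icc.1 (hAmem s hs).1
    have h1 := logHeight₁_add_le (1 : K) ((s : K) * z)
    have h2 := logHeight₁_mul_le (s : K) z
    have h3 := natCast_height_le (K := K) s
    have h4 : (totalWeight K : ℝ) * log s ≤ totalWeight K * log r := by
      have : (0:ℝ) < s := by exact_mod_cast hs'.1
      gcongr
      exact hs'.2
    have h5 : (totalWeight K : ℝ) * log 2 ≤ totalWeight K * log r := by
      gcongr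
      linarith
    rw [logHeight₁_one] at h1
    simp only [g]
    linarith
  have hz0 : 0 ≤ logHeight₁ z := zero_le_logHeight₁ z
  have hdl : 0 < totalWeight K * log r := by positivity
  -- main counting bound
  have hmain : (A.card : ℝ) ≤ (5 ^ E.card) ^ 8 * (4 * X ^ 2) := by
    rcases le_total (12 * (totalWeight K * log r)) (logHeight₁ z) with hc | hc
    · obtain ⟨t, ht, A', hA', hne, hdist, hcard⟩ := halving_iter A hAne f
        (2 * (logHeight₁ z + 2 * (totalWeight K * log r))) (by positivity)
        (fun a ha => by rw [hf1 a ha]; linarith [hgle a ha]) 1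
      have hsub : A' ⊆ {t} := by
        intro s hs
        rw [Finset.mem_singleton]
        by_contra hst
        have h1 := hdist s hs
        rw [hf2 s (hA' hs) t ht] at h1
        have h2 := height_ratio z r s t (hAmem s (hA' hs)).1 (hAmem t ht).1 hst (hAmem t ht).2
        have h5 : (totalWeight K : ℝ) * log 2 ≤ totalWeight K * log r := by
          gcongr
          linarith
        simp only [g] at h1
        norm_num at h1
        nlinarith
      have hone : A'.card ≤ 1 := by simpa using Finset.card_le_card hsub
      have h3 : A.card ≤ (5 ^ E.card) ^ 8 := by
        calc A.card ≤ _ := hcard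
          _ ≤ (5 ^ E.card) ^ (1 + 1) * 1 := by gcongr; norm_num
          _ ≤ (5 ^ E.card) ^ 8 := by
            rw [mul_one]; exact Nat.pow_le_pow_right (by positivity) (by norm_num)
      have h4 : (A.card : ℝ) ≤ (5 ^ E.card) ^ 8 := by exact_mod_cast h3
      refine h4.trans (le_mul_of_one_le_right (by positivity) ?_)
      nlinarith
    · obtain ⟨t, ht, A', hA', hne, hdist, hcard⟩ := halving_iter A hAne f
        (28 * (totalWeight K * log r)) (by positivity)
        (fun a ha => by rw [hf1 a ha]; linarith [hgle a ha]) 7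
      have h1 := fiber_card z hz r t X hX16 hXr (hAmem t ht).2 A' (by
        intro s hs
        have h1 := hdist s hs
        rw [hf2 s (hA' hs) t ht] at h1
        simp only [g] at h1
        norm_num at h1
        linarith)
      have h2 : (A.card : ℝ) ≤ (5 ^ (Module.finrank ℝ V)) ^ (7 + 1) * A'.card := by
        exact_mod_cast hcard
      refine h2.trans ?_
      gcongr
      norm_num
  have h5 : ((5:ℝ) ^ E.card) ^ 8 ≤ X := by
    rw [← log_le_log_iff (by positivity) hX0, log_pow, log_pow]
    have hlog5 : log 5 ≤ 4 := by
      have := log_le_sub_one_of_pos (show (0:ℝ) < 5 by norm_num)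
      linarith
    have hlog5' : 0 ≤ log 5 := log_nonneg (by norm_num)
    have : (E.card : ℝ) * log 5 ≤ (1 / 200 * log r) * 4 := by gcongr
    push_cast
    linarith
  have h6 : (r : ℝ) ≤ A.card + 1 := by exact_mod_cast hAcard
  have h7 : (A.card : ℝ) ≤ X * (4 * X ^ 2) := hmain.trans (by gcongr)
  rw [← hX] at h6
  have h8 : X ^ 4 ≥ 16 * X ^ 3 := by
    have : 0 ≤ X ^ 3 := by positivity
    nlinarith
  have h9 : 1 < X ^ 3 := one_lt_pow₀ (by linarith) (by norm_num)
  nlinarith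

lemma MultInd.map {K L : Type*} [Field K] [Field L] (φ : K →+* L) {z : K} {E : Finset ℕ}
    (h : MultInd z E) : MultInd (φ z) E := by
  have e : ∀ s : ℕ, 1 + (s : L) * φ z = φ (1 + (s : K) * z) := by intro s; simp
  refine ⟨fun s hs => ?_, fun n hn => h.2 n ?_⟩
  · rw [e]; exact (map_ne_zero φ).2 (h.1 s hs)
  · apply φ.injective
    rw [map_one, ← hn, map_prod]
    simp only [e, map_zpow₀]

lemma transcendental_case (z : ℂ) (hz : Transcendental ℚ z) (r : ℕ) :
    MultInd z (Finset.Icc 1 r) := by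
  classical
  have hne : ∀ s ∈ Finset.Icc 1 r, 1 + (s : ℂ) * z ≠ 0 := by
    intro s hs h0
    have hs' : (s : ℚ) ≠ 0 := by
      have := (Finset.mem_Icc.1 hs).1
      exact_mod_cast (by omega : s ≠ 0)
    have hs'' : (s : ℂ) ≠ 0 := by exact_mod_cast hs'
    apply hz
    have : z = algebraMap ℚ ℂ (-(s : ℚ)⁻¹) := by
      simp only [map_neg, map_inv₀, map_natCast]
      field_simp
      linear_combination h0
    rw [this]
    exact isAlgebraic_algebraMap _
  refine ⟨hne, ?_⟩
  intro n hn
  let P : ℕ → Polynomial ℚ := fun s => 1 + Polynomial.C (s : ℚ) * Polynomial.X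
  let f : Polynomial ℚ := ∏ s ∈ Finset.Icc 1 r, P s ^ (n s).toNat
  let g : Polynomial ℚ := ∏ s ∈ Finset.Icc 1 r, P s ^ (-n s).toNat
  have haev : ∀ s, Polynomial.aeval z (P s) = 1 + (s : ℂ) * z := by
    intro s; simp [P]
  have hfg : f = g := by
    apply (transcendental_iff_injective.1 hz)
    simp only [f, g, map_prod, map_pow, haev]
    have h1 : ∏ s ∈ Finset.Icc 1 r, (1 + (s : ℂ) * z) ^ (n s).toNat =
        (∏ s ∈ Finset.Icc 1 r, (1 + (s : ℂ) * z) ^ (n s)) *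
        ∏ s ∈ Finset.Icc 1 r, (1 + (s : ℂ) * z) ^ (-n s).toNat := by
      rw [← Finset.prod_mul_distrib]
      refine Finset.prod_congr rfl fun s hs => ?_
      rw [← zpow_natCast, ← zpow_natCast, ← zpow_add₀ (hne s hs)]
      congr 1
      omega
    rw [h1, hn, one_mul]
  intro s hs
  have hs0 : (s : ℚ) ≠ 0 := by
    have := (Finset.mem_Icc.1 hs).1
    exact_mod_cast (by omega : s ≠ 0)
  have hPev : ∀ t, (P t).eval (-(s : ℚ)⁻¹) = 0 ↔ t = s := by
    intro t
    simp only [P, Polynomial.eval_add, Polynomial.eval_one, Polynomial.eval_mul,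
      Polynomial.eval_C, Polynomial.eval_X]
    constructor
    · intro h
      field_simp at h
      have : (t : ℚ) = s := by linarith
      exact_mod_cast this
    · rintro rfl
      field_simp
      ring
  have hroot : ∀ m : ℕ → ℕ, (∏ t ∈ Finset.Icc 1 r, P t ^ m t).eval (-(s : ℚ)⁻¹) = 0 ↔ m s ≠ 0 := by
    intro m
    rw [Polynomial.eval_prod, Finset.prod_eq_zero_iff]
    simp only [Polynomial.eval_pow, pow_eq_zero_iff', hPev]
    constructor
    · rintro ⟨t, _, rfl, h⟩; exact h
    · intro h; exact ⟨s, hs, rfl, h⟩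
  have h1 := hroot fun t => (n t).toNat
  have h2 := hroot fun t => (-n t).toNat
  have h3 : (n s).toNat ≠ 0 ↔ (-n s).toNat ≠ 0 := by
    rw [← h1, ← h2]
    change f.eval _ = 0 ↔ g.eval _ = 0
    rw [hfg]
  omega

end Aux


/-- Lemma 3.2: There is an absolute constant `c > 0` such that for every sufficiently large
`r` and every `z ∈ ℂ^*`, the set `{1 + s·z : 1 ≤ s ≤ r}` contains a multiplicatively
independent subset `{1 + s·z : s ∈ E}` with `|E| > c·log r`. -/
theorem multiplicatively_independent_subset_of_progression :
    ∃ c : ℝ, 0 < c ∧ ∃ r₀ : ℕ, ∀ r : ℕ, r ≥ r₀ → ∀ z : ℂ, z ≠ 0 →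
      ∃ E : Finset ℕ, E ⊆ Finset.Icc 1 r ∧
        (E.card : ℝ) > c * Real.log r ∧
        (∀ s ∈ E, 1 + (s : ℂ) * z ≠ 0) ∧
        (∀ n : ℕ → ℤ, (∏ s ∈ E, (1 + (s : ℂ) * z) ^ (n s)) = 1 → ∀ s ∈ E, n s = 0) := by
  refine ⟨1 / 200, by norm_num, 2 ^ 16, ?_⟩
  intro r hr z hz
  by_cases ht : Transcendental ℚ z
  · have h := transcendental_case z ht r
    refine ⟨Finset.Icc 1 r, subset_rfl, ?_, h.1, h.2⟩
    rw [Nat.card_Icc, Nat.add_sub_cancel]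
    have h0 : (0:ℝ) < r := by
      have : 0 < r := lt_of_lt_of_le (by norm_num) hr
      exact_mod_cast this
    have := Real.log_le_sub_one_of_pos h0
    linarith
  · have halg : IsAlgebraic ℚ z := not_not.1 ht
    let K := IntermediateField.adjoin ℚ {z}
    have hfd : FiniteDimensional ℚ K :=
      IntermediateField.adjoin.finiteDimensional halg.isIntegral
    have : NumberField K := { to_charZero := inferInstance, to_finiteDimensional := hfd }
    let z' : K := IntermediateField.AdjoinSimple.gen ℚ z
    have hz' : algebraMap K ℂ z' = z := IntermediateField.AdjoinSimple.algebraMap_gen ℚ z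
    have hne : z' ≠ 0 := by
      intro h
      rw [h, map_zero] at hz'
      exact hz hz'.symm
    obtain ⟨E, hE, hc, hI⟩ := numberField_case z' hne r hr
    have hI' := hI.map (algebraMap K ℂ)
    rw [hz'] at hI'
    exact ⟨E, hE, hc, hI'.1, hI'.2⟩
end
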